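/- arXiv:2202.01551 — 3 statements merged into one kernel-verified Lean document; each statement's English description precedes it below -/
import Mathlib

section
/- Let M be a strong pseudo-injective left S-module, let n be a positive integer, and let C be an S-submodule of M^n. Assume that at least one of the following five conditions holds: (1) C is finite and soc_S(M) is a cyclic left S-module; (2) all the S-submodules of C are cyclic; (3) C is finite, C has a non-cyclic S-submodule, and n ≤ ζ_S(C) − 1; (4) n ≤ 2; (5) for every proper two-sided ideal Q of S, the quotient ring S/Q is infinite. Then every Hamming weight preserving S-linear map f : C → M^n extends to a Hamming weight isometry ψ ∈ Aut_S(M^n), i.e., ψ restricted to C equals f. -/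
/-- Hamming weight on `M^n`. -/
noncomputable def hwt {n : ℕ} {M : Type*} [Zero M] (α : Fin n → M) : ℕ := Set.ncard {i | α i ≠ 0}

/-- The socle of a module: its largest semisimple submodule. -/
noncomputable def socle (S : Type*) [Ring S] (M : Type*) [AddCommGroup M] [Module S M] :
    Submodule S M :=
  sSup {W : Submodule S M | IsSemisimpleModule S W}

open Classical in
theorem aux_residual {S X : Type*} [Ring S] [AddCommGroup X] [Module S X]
    (s t : Multiset (Submodule S X))
    (h : ∀ x : X, s.countP (fun A => x ∈ A) = t.countP (fun A => x ∈ A)) (hne : s ≠ t) :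
    ∃ s' t' : Multiset (Submodule S X), s' ≤ s ∧ t' ≤ t ∧ (∀ A ∈ s', A ∉ t') ∧ s' ≠ 0 ∧
      ∀ x : X, s'.countP (fun A => x ∈ A) = t'.countP (fun A => x ∈ A) := by
  have e1 : s = s - t + s ∩ t := (Multiset.sub_add_inter s t).symm
  have e2 : t = t - s + s ∩ t := by
    rw [Multiset.inter_comm]; exact (Multiset.sub_add_inter t s).symm
  have hc : ∀ x : X, (s - t).countP (fun A => x ∈ A) = (t - s).countP (fun A => x ∈ A) := by
    intro x
    have := h x
    have q1 := congrArg (Multiset.countP (fun A => x ∈ A)) e1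
    have q2 := congrArg (Multiset.countP (fun A => x ∈ A)) e2
    rw [Multiset.countP_add] at q1 q2
    omega
  refine ⟨s - t, t - s, Multiset.sub_le_self _ _, Multiset.sub_le_self _ _, ?_, ?_, hc⟩
  · intro A hA hB
    rw [← Multiset.count_pos, Multiset.count_sub] at hA hB
    omega
  · intro h0
    have h1 := hc 0
    rw [h0] at h1
    simp only [Multiset.countP_zero, zero_mem] at h1
    have h2 : t - s = 0 := by
      rw [Multiset.eq_zero_iff_forall_notMem]
      intro A hA
      exact (Multiset.countP_eq_zero.mp h1.symm) A hA trivial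
    apply hne
    rw [h0] at e1
    rw [h2] at e2
    exact e1.trans e2.symm

open Classical in
theorem aux_cover {S X : Type*} [Ring S] [AddCommGroup X] [Module S X]
    (s t : Multiset (Submodule S X)) (n : ℕ) (hs : s.card = n) (ht : t.card = n)
    (h : ∀ x : X, s.countP (fun A => x ∈ A) = t.countP (fun A => x ∈ A)) (hne : s ≠ t) :
    ∃ (W : Submodule S X) (u : Multiset (Submodule S X)), u.card ≤ n ∧
      (∀ B ∈ u, ¬ W ≤ B) ∧ ∀ x ∈ W, ∃ B ∈ u, x ∈ B := by
  obtain ⟨s', t', hs', ht', hd, h0, hc⟩ := aux_residual s t h hne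
  have key : ∀ (s' t' : Multiset (Submodule S X)), (∀ A ∈ s', A ∉ t') →
      (∀ x : X, s'.countP (fun A => x ∈ A) = t'.countP (fun A => x ∈ A)) → t'.card ≤ n →
      ∀ W ∈ s', (∀ B ∈ t', W ≤ B → B ≤ W) →
      ∃ (W : Submodule S X) (u : Multiset (Submodule S X)), u.card ≤ n ∧
      (∀ B ∈ u, ¬ W ≤ B) ∧ ∀ x ∈ W, ∃ B ∈ u, x ∈ B := by
    intro s' t' hd hc hn W hW hmax
    refine ⟨W, t', hn, ?_, ?_⟩
    · intro B hB hWB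
      exact hd W hW (le_antisymm hWB (hmax B hB hWB) ▸ hB)
    · intro x hx
      have : 0 < s'.countP (fun A => x ∈ A) := Multiset.countP_pos.mpr ⟨W, hW, hx⟩
      rw [hc x, Multiset.countP_pos] at this
      exact this
  have hne' : (s' + t').toFinset.Nonempty := by
    obtain ⟨A, hA⟩ := Multiset.exists_mem_of_ne_zero h0
    exact ⟨A, by simp [hA]⟩
  obtain ⟨W, hW⟩ := Finset.exists_maximal hne'
  have hW1 : W ∈ s' ∨ W ∈ t' := by simpa using hW.1
  have hW2 : ∀ B, B ∈ s' ∨ B ∈ t' → W ≤ B → B ≤ W := by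
    intro B hB hWB
    exact hW.2 (by simpa using hB) hWB
  rcases hW1 with h1 | h1
  · exact key s' t' hd hc (ht ▸ Multiset.card_le_card ht') W h1 (fun B hB => hW2 B (Or.inr hB))
  · exact key t' s' (fun A hA hA' => hd A hA' hA) (fun x => (hc x).symm)
      (hs ▸ Multiset.card_le_card hs') W h1 (fun B hB => hW2 B (Or.inl hB))

theorem aux_case4 {S X : Type*} [Ring S] [AddCommGroup X] [Module S X]
    (W : Submodule S X) (u : Multiset (Submodule S X)) (hu : u.card ≤ 2)
    (h1 : ∀ B ∈ u, ¬ W ≤ B) (h2 : ∀ x ∈ W, ∃ B ∈ u, x ∈ B) : False := by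
  have h3 : u.card = 0 ∨ u.card = 1 ∨ u.card = 2 := by omega
  rcases h3 with h3 | h3 | h3
  · rw [Multiset.card_eq_zero] at h3
    obtain ⟨B, hB, -⟩ := h2 0 (zero_mem _)
    simp [h3] at hB
  · obtain ⟨B, rfl⟩ := Multiset.card_eq_one.mp h3
    simp only [Multiset.mem_singleton, forall_eq, exists_eq_left] at h1 h2
    exact h1 h2
  · obtain ⟨A, B, rfl⟩ := Multiset.card_eq_two.mp h3
    have hA := h1 A (by simp)
    have hB := h1 B (by simp)
    obtain ⟨a, haW, haA⟩ := SetLike.not_le_iff_exists.mp hA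
    obtain ⟨b, hbW, hbB⟩ := SetLike.not_le_iff_exists.mp hB
    have h2' : ∀ x ∈ W, x ∈ A ∨ x ∈ B := by
      intro x hx
      obtain ⟨D, hD, hxD⟩ := h2 x hx
      have : D = A ∨ D = B := by simpa using hD
      rcases this with rfl | rfl <;> simp [hxD]
    have haB := (h2' a haW).resolve_left haA
    have hbA := (h2' b hbW).resolve_right hbB
    rcases h2' _ (W.add_mem haW hbW) with h | h
    · exact haA ((A.add_mem_iff_left hbA).mp h)
    · exact hbB ((B.add_mem_iff_right haB).mp h)

theorem aux_case5 {S X : Type*} [Ring S] [AddCommGroup X] [Module S X]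
    (hS : ∀ Q : TwoSidedIdeal S, Q ≠ ⊤ → Infinite Q.ringCon.Quotient)
    (W : Submodule S X) (u : Multiset (Submodule S X))
    (h1 : ∀ B ∈ u, ¬ W ≤ B) (h2 : ∀ x ∈ W, ∃ B ∈ u, x ∈ B) : False := by
  classical
  obtain ⟨B, hB, hfi⟩ := Submodule.exists_finiteIndex_of_cover (s := u.toFinset)
    (p := fun B : Submodule S X => B.comap W.subtype) (by
      ext x
      obtain ⟨B, hB, hx⟩ := h2 x x.2
      simpa using ⟨B, hB, hx⟩)
  have hB' := h1 B (by simpa using hB)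
  set D := B.comap W.subtype with hD
  have hfin : Finite (W ⧸ D) := by
    have := AddSubgroup.finite_quotient_of_finiteIndex (H := D.toAddSubgroup)
    exact this
  have hnt : Nontrivial (W ⧸ D) := by
    rw [Submodule.Quotient.nontrivial_iff]
    intro h
    apply hB'
    intro x hx
    have : (⟨x, hx⟩ : W) ∈ D := h ▸ Submodule.mem_top
    simpa [hD] using this
  let φ : S →+* AddMonoid.End (W ⧸ D) := Module.toAddMonoidEnd S (W ⧸ D)
  have hfin2 : Finite (AddMonoid.End (W ⧸ D)) := 
    Finite.of_injective (fun f : AddMonoid.End (W ⧸ D) => (f : (W ⧸ D) → (W ⧸ D))) DFunLike.coe_injective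
  have := hS (TwoSidedIdeal.ker φ) (by
    intro h
    have h1 : (1 : S) ∈ TwoSidedIdeal.ker φ := by rw [h]; trivial
    rw [TwoSidedIdeal.mem_ker, map_one] at h1
    obtain ⟨a, ha⟩ := exists_ne (0 : W ⧸ D)
    exact ha (DFunLike.congr_fun h1 a))
  have e := RingCon.kerLift_injective φ
  exact (Finite.of_injective _ e).not_infinite this

open Classical in
theorem aux_case3 {S X : Type*} [Ring S] [AddCommGroup X] [Module S X] [Finite X] (n : ℕ)
    (s t : Multiset (Submodule S X)) (hs : s.card = n) (ht : t.card = n)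
    (h : ∀ x : X, s.countP (fun A => x ∈ A) = t.countP (fun A => x ∈ A))
    (hmu : ∀ μ : Submodule S X → Submodule S X → ℤ,
          (∀ A B : Submodule S X, ¬A ≤ B → μ A B = 0) →
          (∀ A : Submodule S X, μ A A = 1) →
          (∀ A B : Submodule S X, A ≤ B → A ≠ B →
            (∑ᶠ U ∈ {U : Submodule S X | A ≤ U ∧ U ≤ B}, μ U B) = 0) →
          2 * (n + 1) ≤ sInf {k : ℕ | ∃ W : Submodule S X,
            (¬∃ g : X, W = Submodule.span S {g}) ∧
            k = ∑ᶠ U ∈ {U : Submodule S X | U ≤ W}, (μ U W).natAbs}) : s = t := by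
  have hfinS : Finite (Submodule S X) := inferInstance
  let _ : Fintype (Submodule S X) := Fintype.ofFinite _
  let _ : LocallyFiniteOrder (Submodule S X) := Fintype.toLocallyFiniteOrder
  let μ : Submodule S X → Submodule S X → ℤ := fun A B => IncidenceAlgebra.mu ℤ A B
  have m1 : ∀ A B : Submodule S X, ¬A ≤ B → μ A B = 0 := fun A B hAB =>
    IncidenceAlgebra.apply_eq_zero_of_not_le hAB _
  have m2 : ∀ A : Submodule S X, μ A A = 1 := fun A => IncidenceAlgebra.mu_self A
  have m3 : ∀ A B : Submodule S X, A ≠ B → ∑ U ∈ Finset.Icc A B, μ U B = 0 := by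
    intro A B hne
    have := IncidenceAlgebra.sum_Icc_mu_left (𝕜 := ℤ) A B
    rwa [if_neg hne] at this
  have m4 := hmu μ m1 m2 (by
    intro A B _ hne
    rw [← m3 A B hne]
    apply finsum_mem_eq_sum_of_inter_support_eq
    ext; simp)
  let F : Submodule S X → ℤ := fun U => s.countP (fun A => U ≤ A) - t.countP (fun A => U ≤ A)
  have hF : ∀ U, F U = 0 := by
    by_contra! hex
    have : (Finset.univ.filter (fun U => F U ≠ 0)).Nonempty := by
      obtain ⟨U, hU⟩ := hex
      exact ⟨U, by simp [hU]⟩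
    obtain ⟨W, hW⟩ := Finset.exists_minimal this
    have hW1 : F W ≠ 0 := by simpa using hW.1
    have hW2 : ∀ V, V < W → F V = 0 := by
      intro V hV
      by_contra hne
      exact hV.not_ge (hW.2 (by simpa using hne) hV.le)
    have hnc : ¬∃ g : X, W = Submodule.span S {g} := by
      rintro ⟨g, rfl⟩
      apply hW1
      simp only [F, Submodule.span_singleton_le_iff_mem, h g, sub_self]
    let c : Submodule S X → ℤ := fun V =>
      s.countP (fun A => A ⊓ W = V) - t.countP (fun A => A ⊓ W = V)
    have hcnt : ∀ (r : Multiset (Submodule S X)) (V : Submodule S X), V ≤ W →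
        ∑ U ∈ Finset.Icc V W, r.countP (fun A => A ⊓ W = U) = r.countP (fun A => V ≤ A) := by
      intro r V hV
      induction r using Multiset.induction_on with
      | empty => simp
      | cons a r ih =>
        simp only [Multiset.countP_cons, Finset.sum_add_distrib, ih]
        congr 1
        simp [hV]
    have hcF : ∀ V, V ≤ W → ∑ U ∈ Finset.Icc V W, c U = F V := by
      intro V hV
      simp only [c, F, Finset.sum_sub_distrib, ← hcnt s V hV, ← hcnt t V hV]
      push_cast
      rfl
    have hcm : ∀ V, V ≤ W → c V = F W * μ V W := by
      intro V
      induction V using WellFoundedGT.induction with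
      | ind V ih =>
        intro hV
        rcases eq_or_lt_of_le hV with rfl | hlt
        · have := hcF V le_rfl
          simp only [Finset.Icc_self, Finset.sum_singleton] at this
          rw [this, m2, mul_one]
        · have e1 := hcF V hV
          rw [hW2 V hlt, ← Finset.Ioc_insert_left hV, Finset.sum_insert (by simp)] at e1
          have e2 := m3 V W hlt.ne
          rw [← Finset.Ioc_insert_left hV, Finset.sum_insert (by simp)] at e2
          have e3 : ∑ U ∈ Finset.Ioc V W, c U = F W * ∑ U ∈ Finset.Ioc V W, μ U W := by
            rw [Finset.mul_sum]
            refine Finset.sum_congr rfl fun U hU => ?_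
            rw [Finset.mem_Ioc] at hU
            exact ih U hU.1 hU.2
          rw [e3] at e1
          linear_combination e1 - F W * e2
    have hle : ∑ᶠ U ∈ {U : Submodule S X | U ≤ W}, (μ U W).natAbs
        = ∑ U ∈ Finset.Icc ⊥ W, (μ U W).natAbs := by
      apply finsum_mem_eq_sum_of_inter_support_eq
      ext; simp
    have m5 := m4.trans (Nat.sInf_le ⟨W, hnc, rfl⟩)
    rw [hle] at m5
    have m6 : ∑ U ∈ Finset.Icc ⊥ W, (μ U W).natAbs ≤ ∑ U ∈ Finset.Icc ⊥ W,
        (s.countP (fun A => A ⊓ W = U) + t.countP (fun A => A ⊓ W = U)) := by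
      refine Finset.sum_le_sum fun U hU => ?_
      have e := hcm U (Finset.mem_Icc.mp hU).2
      have e1 : (μ U W).natAbs ≤ (c U).natAbs := by
        rw [e, Int.natAbs_mul]
        exact Nat.le_mul_of_pos_left _ (Int.natAbs_pos.mpr hW1)
      simp only [c] at e1
      omega
    rw [Finset.sum_add_distrib, hcnt s _ bot_le, hcnt t _ bot_le] at m6
    have := Multiset.countP_le_card (fun A => (⊥ : Submodule S X) ≤ A) s
    have := Multiset.countP_le_card (fun A => (⊥ : Submodule S X) ≤ A) t
    omega
  have hcnt : ∀ (r : Multiset (Submodule S X)) (V : Submodule S X),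
      ∑ U ∈ Finset.univ.filter (fun U => V < U), r.count U + r.count V
        = r.countP (fun A => V ≤ A) := by
    intro r V
    induction r using Multiset.induction_on with
    | empty => simp
    | cons a r ih =>
      simp only [Multiset.countP_cons, Multiset.count_cons, Finset.sum_add_distrib, ← ih]
      rw [Finset.sum_ite_eq']
      simp only [Finset.mem_filter, Finset.mem_univ, true_and]
      by_cases h1 : V = a
      · subst h1; simp [add_assoc]
      · have h2 : V < a ↔ V ≤ a := ⟨le_of_lt, fun h => lt_of_le_of_ne h h1⟩
        simp only [h2, h1]
        split_ifs <;> (simp_all; try omega)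
  ext V
  induction V using WellFoundedGT.induction with
  | ind V ih =>
    have e1 := hcnt s V
    have e2 := hcnt t V
    have e3 : ∑ U ∈ Finset.univ.filter (fun U => V < U), s.count U
        = ∑ U ∈ Finset.univ.filter (fun U => V < U), t.count U :=
      Finset.sum_congr rfl fun U hU => ih U (by simpa using hU)
    have e4 := hF V
    simp only [F] at e4
    omega

theorem aux_frob (R : Type*) [Ring R] [IsSemisimpleRing R] :
    ∃ χ : R →+ AddCircle (1 : ℚ), ∀ x : R, (∀ r : R, χ (r * x) = 0) → x = 0 := by
  classical
  obtain ⟨n, D, d, _, _, ⟨e⟩⟩ := IsSemisimpleRing.exists_ringEquiv_pi_matrix_divisionRing R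
  have h1 : ∀ i, ∃ c : D i →+ AddCircle (1 : ℚ), c 1 ≠ 0 := fun i =>
    CharacterModule.exists_character_apply_ne_zero_of_ne_zero (one_ne_zero (α := D i))
  choose c hc using h1
  let χ' : (Π i, Matrix (Fin (d i)) (Fin (d i)) (D i)) →+ AddCircle (1 : ℚ) :=
    ∑ i, ((c i).comp (Matrix.traceAddMonoidHom (Fin (d i)) (D i))).comp
      (Pi.evalAddMonoidHom (fun i => Matrix (Fin (d i)) (Fin (d i)) (D i)) i)
  refine ⟨χ'.comp e.toAddEquiv.toAddMonoidHom, ?_⟩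
  intro x hx
  by_contra hne
  have hne' : e x ≠ 0 := by simpa using hne
  obtain ⟨i, hi⟩ := Function.ne_iff.mp hne'
  have : ∃ a b, e x i a b ≠ 0 := by
    by_contra! h
    exact hi (by ext a b; simpa using h a b)
  obtain ⟨a, b, hab⟩ := this
  have h2 := hx (e.symm (Pi.single i (Matrix.single b a ((e x i a b)⁻¹))))
  apply hc i
  have h3 : χ' (Pi.single i (Matrix.single b a ((e x i a b)⁻¹)) * e x) = 0 := by
    simpa using h2
  simp only [χ', AddMonoidHom.finsetSum_apply] at h3
  rw [Finset.sum_eq_single i] at h3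
  · simpa [Matrix.trace_single_mul, hab] using h3
  · intro j _ hj
    simp [Pi.single_eq_of_ne hj]
  · simp

theorem aux_cyc {S T : Type*} [Ring S] [AddCommGroup T] [Module S T] [Finite T]
    [IsSemisimpleModule S T] (g : T) (hg : ∀ t : T, ∃ s : S, s • g = t) :
    ∃ χ : T →+ AddCircle (1 : ℚ), ∀ x : T, (∀ s : S, χ (s • x) = 0) → x = 0 := by
  let R := (Module.toAddMonoidEnd S T).range
  let σ : S →+* R := (Module.toAddMonoidEnd S T).rangeRestrict
  have hσ : Function.Surjective σ := RingHom.rangeRestrict_surjective _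
  have : RingHomSurjective σ := ⟨hσ⟩
  have hsm : ∀ (s : S) (t : T), σ s • t = s • t := fun s t => rfl
  let l : T →ₛₗ[σ] T := { toFun := id, map_add' := fun _ _ => rfl, map_smul' := fun s t => (hsm s t).symm }
  have hss : IsSemisimpleModule R T :=
    (LinearMap.isSemisimpleModule_iff_of_bijective l Function.bijective_id).mp inferInstance
  let ev : R →ₗ[R] (T → T) := LinearMap.pi (fun t => LinearMap.toSpanSingleton R T t)
  have hev : Function.Injective ev := by
    intro a b hab
    ext t
    exact congrFun hab t
  have hR : IsSemisimpleRing R := IsSemisimpleModule.of_injective ev hev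
  obtain ⟨χ, hχ⟩ := aux_frob R
  obtain ⟨h, hh⟩ := IsSemisimpleModule.lifting_property (LinearMap.toSpanSingleton R T g)
    (by
      intro t
      obtain ⟨s, hs⟩ := hg t
      exact ⟨σ s, hs⟩) (LinearMap.id)
  refine ⟨χ.comp h.toAddMonoidHom, ?_⟩
  intro x hx
  have : h x = 0 := by
    apply hχ
    intro r
    obtain ⟨s, rfl⟩ := hσ r
    have := hx s
    rw [← hsm] at this
    simpa using this
  have h2 := LinearMap.congr_fun hh x
  simpa [this] using h2.symm

theorem aux_soc {S M : Type*} [Ring S] [AddCommGroup M] [Module S M] (g : M)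
    (hg : socle S M = Submodule.span S {g}) (N : Submodule S M) [Finite N] :
    ∃ χ : M →+ AddCircle (1 : ℚ), ∀ x ∈ N, (∀ s : S, χ (s • x) = 0) → x = 0 := by
  have hss : IsSemisimpleModule S (socle S M) := by
    have := isSemisimpleModule_biSup_of_isSemisimpleModule_submodule
      (s := {W : Submodule S M | IsSemisimpleModule S W}) (p := id) (fun i hi => hi)
    rw [socle, sSup_eq_iSup]
    exact this
  let T : Submodule S (socle S M) := N.comap (socle S M).subtype
  have hT : ∀ x : socle S M, x ∈ T ↔ (x : M) ∈ N := fun x => Iff.rfl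
  have hfin : Finite T := Finite.of_injective (fun t : T => (⟨t.1.1, t.2⟩ : N)) (by
    intro a b hab
    have hab2 : (a.1.1 : M) = b.1.1 := congrArg (fun z : N => (z : M)) hab
    exact Subtype.ext (Subtype.ext hab2))
  obtain ⟨q, hq⟩ := IsSemisimpleModule.extension_property (R := S) T.subtype T.injective_subtype
    (LinearMap.id)
  have hgm : g ∈ socle S M := hg ▸ Submodule.mem_span_singleton_self g
  obtain ⟨χ0, h0⟩ := aux_cyc (S := S) (q ⟨g, hgm⟩) (by
    intro t
    have : (t.1.1 : M) ∈ Submodule.span S {g} := hg ▸ t.1.2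
    obtain ⟨s, hs⟩ := Submodule.mem_span_singleton.mp this
    refine ⟨s, ?_⟩
    rw [← map_smul]
    have : s • (⟨g, hgm⟩ : socle S M) = T.subtype t := Subtype.ext hs
    rw [this]
    exact LinearMap.congr_fun hq t)
  obtain ⟨χ, hχ⟩ := CharacterModule.dual_surjective_of_injective (R := ℤ)
    ((((socle S M).subtype).comp T.subtype).toAddMonoidHom.toIntLinearMap)
    (by
      exact (socle S M).injective_subtype.comp T.injective_subtype) χ0
  have hχ' : ∀ t : T, χ t.1.1 = χ0 t := fun t => DFunLike.congr_fun hχ t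
  refine ⟨χ, ?_⟩
  intro x hx hs
  by_contra hne
  have hle : Submodule.span S {x} ≤ N := by simpa using hx
  have hfx : Finite (Submodule.span S {x}) := Finite.of_injective _ (Submodule.inclusion_injective hle)
  have hnt : Nontrivial (Submodule.span S {x}) := by
    rw [Submodule.nontrivial_iff_ne_bot]
    simpa using hne
  obtain ⟨E, hE⟩ := IsAtomic.exists_atom (Submodule S (Submodule.span S {x}))
  have hEs : IsSimpleModule S E := isSimpleModule_iff_isAtom.mpr hE
  obtain ⟨y, hyE, hy0⟩ := E.exists_mem_ne_zero_of_ne_bot hE.1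
  have hsE : IsSemisimpleModule S (E.map (Submodule.span S {x}).subtype) :=
    IsSemisimpleModule.congr (E.equivMapOfInjective _ (Submodule.injective_subtype _)).symm
  have hysoc : (y : M) ∈ socle S M :=
    (le_sSup (a := E.map (Submodule.span S {x}).subtype) hsE :
      E.map (Submodule.span S {x}).subtype ≤ socle S M) ⟨y, hyE, rfl⟩
  have h1 := h0 ⟨⟨y, hysoc⟩, hle y.2⟩ (by
    intro s
    rw [← hχ']
    obtain ⟨r, hr⟩ := Submodule.mem_span_singleton.mp y.2
    change χ (s • (y : M)) = 0
    rw [← hr, smul_smul]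
    exact hs _)
  apply hy0
  have := congrArg (fun z : T => (z.1.1 : M)) h1
  exact Subtype.ext this

theorem aux_char {X : Type*} [AddCommGroup X] (χ : X →+ AddCircle (1 : ℚ)) :
    ∃ ψ : AddChar X ℂ, ∀ x, ψ x = 1 ↔ χ x = 0 := by
  let j : AddCircle (1 : ℚ) →+ AddCircle (1 : ℝ) :=
    QuotientAddGroup.map _ _ (Rat.castHom ℝ).toAddMonoidHom (by
      intro q hq
      obtain ⟨k, rfl⟩ := AddSubgroup.mem_zmultiples_iff.mp hq
      refine AddSubgroup.mem_zmultiples_iff.mpr ⟨k, ?_⟩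
      simp)
  have hj : ∀ z, j z = 0 ↔ z = 0 := by
    intro z
    constructor
    · intro h
      induction z using QuotientAddGroup.induction_on with
      | H q =>
        have h' : ((q : ℝ) : AddCircle (1 : ℝ)) = 0 := h
        rw [AddCircle.coe_eq_zero_iff] at h'
        change ((q : ℚ) : AddCircle (1 : ℚ)) = 0
        rw [AddCircle.coe_eq_zero_iff]
        obtain ⟨k, hk⟩ := h'
        refine ⟨k, ?_⟩
        have : ((k : ℚ) : ℝ) = (q : ℝ) := by simpa using hk
        simpa using (Rat.cast_injective this)
    · rintro rfl; simp
  refine ⟨{ toFun := fun x => ((AddCircle.toCircle (j (χ x)) : Circle) : ℂ)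
            map_zero_eq_one' := by simp
            map_add_eq_mul' := by intro a b; simp [AddCircle.toCircle_add] }, ?_⟩
  intro x
  change ((AddCircle.toCircle (j (χ x)) : Circle) : ℂ) = 1 ↔ _
  rw [← hj (χ x), Circle.coe_eq_one, ← AddCircle.toCircle_zero (T := (1:ℝ))]
  exact (AddCircle.injective_toCircle one_ne_zero).eq_iff

open Classical in
theorem aux_case1 {S M X : Type*} [Ring S] [AddCommGroup M] [Module S M]
    [AddCommGroup X] [Module S X] [Finite X] (g : M)
    (hg : socle S M = Submodule.span S {g})
    (s t : Multiset (Submodule S X))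
    (hs : ∀ A ∈ s, ∃ p : X →ₗ[S] M, LinearMap.ker p = A)
    (ht : ∀ A ∈ t, ∃ p : X →ₗ[S] M, LinearMap.ker p = A)
    (h : ∀ x : X, s.countP (fun A => x ∈ A) = t.countP (fun A => x ∈ A)) : s = t := by
  by_contra hne
  obtain ⟨s', t', hs', ht', hd, h0, hc⟩ := aux_residual s t h hne
  let _ : Fintype X := Fintype.ofFinite X
  have hsum : ∀ (ψ : AddChar X ℂ) (r : Multiset (Submodule S X)),
      (r.map (fun A : Submodule S X => ∑ x : A, ψ x)).sum = ∑ x : X, (r.countP (fun A => x ∈ A) : ℂ) * ψ x := by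
    intro ψ r
    induction r using Multiset.induction_on with
    | empty => simp
    | cons a r ih =>
      simp only [Multiset.map_cons, Multiset.sum_cons, Multiset.countP_cons, ih, Nat.cast_add, add_mul,
        Finset.sum_add_distrib]
      rw [add_comm]
      congr 1
      simp only [Nat.cast_ite, Nat.cast_one, Nat.cast_zero, ite_mul, one_mul, zero_mul]
      rw [← Finset.sum_filter]
      exact (Finset.sum_subtype _ (by simp) _).symm
  have key : ∀ (s' t' : Multiset (Submodule S X)), (∀ A ∈ s', A ∉ t') →
      (∀ x : X, s'.countP (fun A => x ∈ A) = t'.countP (fun A => x ∈ A)) →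
      ∀ W ∈ s', (∃ p : X →ₗ[S] M, LinearMap.ker p = W) → 
      (∀ B, B ∈ s' ∨ B ∈ t' → B ≤ W → W ≤ B) → False := by
    rintro s' t' hd hc W hW ⟨p, rfl⟩ hmin
    obtain ⟨χ, hχ⟩ := aux_soc g hg (LinearMap.range p)
    obtain ⟨ψ, hψ⟩ := aux_char (χ.comp p.toAddMonoidHom)
    have hz : ∀ A : Submodule S X, ¬ A ≤ LinearMap.ker p → ∑ x : A, ψ x = 0 := by
      intro A hA
      obtain ⟨a, ha, hap⟩ := SetLike.not_le_iff_exists.mp hA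
      have : ψ.compAddMonoidHom A.subtype.toAddMonoidHom ≠ 1 := by
        intro h1
        apply hap
        apply hχ _ ⟨a, rfl⟩
        intro s
        have h2 := DFunLike.congr_fun h1 (⟨s • a, A.smul_mem s ha⟩ : A)
        have h3 := (hψ (s • a)).mp h2
        simpa using h3
      exact AddChar.sum_eq_zero_of_ne_one this
    have e1 : (t'.map (fun A : Submodule S X => ∑ x : A, ψ x)).sum = 0 := by
      apply Multiset.sum_eq_zero
      intro z hz'
      obtain ⟨A, hA, rfl⟩ := Multiset.mem_map.mp hz'
      apply hz
      intro hle
      exact hd _ hW (le_antisymm hle (hmin A (Or.inr hA) hle) ▸ hA)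
    have e2 : (s'.map (fun A : Submodule S X => ∑ x : A, ψ x)) = 
        s'.map (fun A => if A = LinearMap.ker p then (Fintype.card (LinearMap.ker p) : ℂ) else 0) := by
      apply Multiset.map_congr rfl
      intro A hA
      split_ifs with h1
      · subst h1
        have : ∀ x : LinearMap.ker p, ψ x = 1 := by
          intro x
          rw [hψ]
          simp
        simp [this]
      · apply hz
        intro hle
        exact h1 (le_antisymm hle (hmin A (Or.inl hA) hle))
    have e3 : (s'.map (fun A : Submodule S X => ∑ x : A, ψ x)).sum = 0 := by
      rw [← e1, hsum, hsum]
      simp only [hc]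
    rw [e2] at e3
    have e4 : ∀ r : Multiset (Submodule S X), 
        (r.map (fun A => if A = LinearMap.ker p then (Fintype.card (LinearMap.ker p) : ℂ) else 0)).sum
        = (r.count (LinearMap.ker p) : ℂ) * Fintype.card (LinearMap.ker p) := by
      intro r
      induction r using Multiset.induction_on with
      | empty => simp
      | cons a r ih =>
        simp only [Multiset.map_cons, Multiset.sum_cons, ih, Multiset.count_cons]
        by_cases h1 : a = LinearMap.ker p
        · simp [h1]; ring
        · simp [h1, Ne.symm h1]
    rw [e4] at e3
    have := Multiset.count_pos.mpr hW
    rcases mul_eq_zero.mp e3 with h | h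
    · have : s'.count (LinearMap.ker p) = 0 := by exact_mod_cast h
      omega
    · have : Fintype.card (LinearMap.ker p) = 0 := by exact_mod_cast h
      exact Fintype.card_ne_zero this
  have hne' : (s' + t').toFinset.Nonempty := by
    obtain ⟨A, hA⟩ := Multiset.exists_mem_of_ne_zero h0
    exact ⟨A, by simp [hA]⟩
  obtain ⟨W, hW⟩ := Finset.exists_minimal hne'
  have hW1 : W ∈ s' ∨ W ∈ t' := by simpa using hW.1
  have hW2 : ∀ B, B ∈ s' ∨ B ∈ t' → B ≤ W → W ≤ B := by
    intro B hB hWB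
    exact hW.2 (by simpa using hB) hWB
  rcases hW1 with h1 | h1
  · exact key s' t' hd hc W h1 (hs W (Multiset.mem_of_le hs' h1)) hW2
  · exact key t' s' (fun A hA hA' => hd A hA' hA) (fun x => (hc x).symm) W h1
      (ht W (Multiset.mem_of_le ht' h1)) (fun B hB => hW2 B hB.symm)

open Classical in
theorem aux_perm {α : Type*} (n : ℕ) (A B : Fin n → α)
    (h : (Finset.univ.val.map A) = (Finset.univ.val.map B)) :
    ∃ σ : Fin n ≃ Fin n, ∀ i, B (σ i) = A i := by
  have h1 : ∀ w, Nonempty ({i // A i = w} ≃ {i // B i = w}) := by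
    intro w
    have := congrArg (Multiset.count w) h
    rw [Multiset.count_map, Multiset.count_map] at this
    apply Fintype.card_eq.mp
    rw [Fintype.card_subtype, Fintype.card_subtype]
    simp only [eq_comm (a := w)] at this
    exact this
  let e := fun w => (h1 w).some
  exact ⟨Equiv.ofFiberEquiv e, fun i => Equiv.ofFiberEquiv_map e i⟩

theorem aux_tau {S M X : Type*} [Ring S] [AddCommGroup M] [Module S M]
    [AddCommGroup X] [Module S X]
    (hM : ∀ B : Submodule S M, ∀ h : B →ₗ[S] M, Function.Injective h →
      ∃ τ : M ≃ₗ[S] M, ∀ b : B, τ b = h b)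
    (p q : X →ₗ[S] M) (h : LinearMap.ker p = LinearMap.ker q) :
    ∃ τ : M ≃ₗ[S] M, ∀ x, τ (p x) = q x := by
  let e := p.quotKerEquivRange.symm
  let k : (X ⧸ LinearMap.ker p) →ₗ[S] M := (LinearMap.ker p).liftQ q h.le
  have hk : Function.Injective k := by
    rw [← LinearMap.ker_eq_bot]
    exact Submodule.ker_liftQ_eq_bot _ _ _ h.ge
  obtain ⟨τ, hτ⟩ := hM (LinearMap.range p) (k.comp e.toLinearMap) (hk.comp e.injective)
  refine ⟨τ, fun x => ?_⟩
  have := hτ ⟨p x, x, rfl⟩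
  rw [this]
  have h2 : e ⟨p x, x, rfl⟩ = (LinearMap.ker p).mkQ x := by
    rw [LinearEquiv.symm_apply_eq]
    rfl
  simp only [LinearMap.comp_apply, LinearEquiv.coe_coe, h2]
  rfl

theorem aux_hwt {S X M : Type*} [Ring S] [AddCommGroup M] [Module S M]
    [AddCommGroup X] [Module S X] (n : ℕ) (p : Fin n → (X →ₗ[S] M)) (x : X)
    [DecidablePred (fun A : Submodule S X => x ∈ A)] :
    (Finset.univ.val.map (fun i => LinearMap.ker (p i))).countP (fun A => x ∈ A)
      = n - hwt (fun i => p i x) := by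
  classical
  rw [Multiset.countP_map, hwt, Set.ncard_eq_toFinset_card']
  have h1 := Finset.card_filter_add_card_filter_not (s := (Finset.univ : Finset (Fin n)))
    (fun i => p i x = 0)
  have h2 : (Multiset.filter (fun i => x ∈ LinearMap.ker (p i)) Finset.univ.val).card
      = (Finset.univ.filter (fun i => p i x = 0)).card := by
    simp [Finset.card, Finset.filter]
  have h3 : ({i | p i x ≠ 0} : Set (Fin n)).toFinset = Finset.univ.filter (fun i => ¬ p i x = 0) := by
    ext; simp
  rw [h2, h3]
  simp only [Finset.card_univ, Fintype.card_fin] at h1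
  omega

theorem stmt15 {S : Type*} [Ring S] {M : Type*} [AddCommGroup M] [Module S M]
    -- `M` is strong pseudo-injective
    (hM : ∀ B : Submodule S M, ∀ h : B →ₗ[S] M, Function.Injective h →
      ∃ τ : M ≃ₗ[S] M, ∀ b : B, τ b = h b)
    (n : ℕ) (hn : 0 < n)
    (C : Submodule S (Fin n → M))
    (hcond :
      -- (1) `C` is finite and `soc_S(M)` is cyclic
      (Finite C ∧ ∃ g : M, socle S M = Submodule.span S {g}) ∨
      -- (2) all `S`-submodules of `C` are cyclic
      (∀ D : Submodule S C, ∃ g : C, D = Submodule.span S {g}) ∨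
      -- (3) `C` is finite, has a non-cyclic submodule, and `n ≤ ζ_S(C) - 1`
      (Finite C ∧ (∃ D : Submodule S C, ¬∃ g : C, D = Submodule.span S {g}) ∧
        ∀ μ : Submodule S C → Submodule S C → ℤ,
          (∀ A B : Submodule S C, ¬A ≤ B → μ A B = 0) →
          (∀ A : Submodule S C, μ A A = 1) →
          (∀ A B : Submodule S C, A ≤ B → A ≠ B →
            (∑ᶠ U ∈ {U : Submodule S C | A ≤ U ∧ U ≤ B}, μ U B) = 0) →
          2 * (n + 1) ≤ sInf {k : ℕ | ∃ W : Submodule S C,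
            (¬∃ g : C, W = Submodule.span S {g}) ∧
            k = ∑ᶠ U ∈ {U : Submodule S C | U ≤ W}, (μ U W).natAbs}) ∨
      -- (4) `n ≤ 2`
      (n ≤ 2) ∨
      -- (5) `S/Q` is infinite for every proper two-sided ideal `Q` of `S`
      (∀ Q : TwoSidedIdeal S, Q ≠ ⊤ → Infinite Q.ringCon.Quotient))
    (f : C →ₗ[S] (Fin n → M))
    (hf : ∀ x : C, hwt (f x) = hwt (x : Fin n → M)) :
    ∃ ψ : (Fin n → M) ≃ₗ[S] (Fin n → M),
      (∀ α : Fin n → M, hwt (ψ α) = hwt α) ∧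
      ∀ x : C, ψ (x : Fin n → M) = f x := by
  classical
  let p : Fin n → (C →ₗ[S] M) := fun i => (LinearMap.proj i).comp C.subtype
  let q : Fin n → (C →ₗ[S] M) := fun i => (LinearMap.proj i).comp f
  let s : Multiset (Submodule S C) := Finset.univ.val.map (fun i => LinearMap.ker (p i))
  let t : Multiset (Submodule S C) := Finset.univ.val.map (fun i => LinearMap.ker (q i))
  have hs : s.card = n := by simp [s]
  have ht : t.card = n := by simp [t]
  have h : ∀ x : C, s.countP (fun A => x ∈ A) = t.countP (fun A => x ∈ A) := by
    intro x
    simp only [s, t]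
    rw [aux_hwt n p x, aux_hwt n q x]
    exact congrArg (n - ·) (hf x).symm
  have hst : s = t := by
    rcases hcond with ⟨hfin, g, hg⟩ | hcyc | ⟨hfin, -, hmu⟩ | hn2 | hS
    · refine aux_case1 g hg s t ?_ ?_ h
      · intro A hA
        obtain ⟨i, -, rfl⟩ := Multiset.mem_map.mp hA
        exact ⟨_, rfl⟩
      · intro A hA
        obtain ⟨i, -, rfl⟩ := Multiset.mem_map.mp hA
        exact ⟨_, rfl⟩
    · by_contra hne
      obtain ⟨W, u, hu, h1, h2⟩ := aux_cover s t n hs ht h hne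
      obtain ⟨g, rfl⟩ := hcyc W
      obtain ⟨B, hB, hgB⟩ := h2 g (Submodule.mem_span_singleton_self g)
      exact h1 B hB (by simpa using hgB)
    · exact aux_case3 n s t hs ht h hmu
    · by_contra hne
      obtain ⟨W, u, hu, h1, h2⟩ := aux_cover s t n hs ht h hne
      exact aux_case4 W u (hu.trans hn2) h1 h2
    · by_contra hne
      obtain ⟨W, u, hu, h1, h2⟩ := aux_cover s t n hs ht h hne
      exact aux_case5 hS W u h1 h2
  obtain ⟨σ, hσ⟩ := aux_perm n _ _ hst
  choose τ hτ using fun i => aux_tau hM (p i) (q (σ i)) (hσ i).symm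
  let ψ : (Fin n → M) ≃ₗ[S] (Fin n → M) :=
    (LinearEquiv.piCongrRight τ).trans (LinearEquiv.funCongrLeft S M σ.symm)
  have hψ : ∀ α i, ψ α i = τ (σ.symm i) (α (σ.symm i)) := fun α i => rfl
  refine ⟨ψ, ?_, ?_⟩
  · intro α
    simp only [hwt, hψ]
    have : {i | τ (σ.symm i) (α (σ.symm i)) ≠ 0} = σ '' {i | α i ≠ 0} := by
      ext i
      simp [Equiv.image_eq_preimage_symm]
    rw [this, Set.ncard_image_of_injective _ σ.injective]
  · intro x
    funext i
    rw [hψ]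
    have := hτ (σ.symm i) x
    rw [σ.apply_symm_apply] at this
    exact this
end

section
/- Suppose that H satisfies the MacWilliams extension property for (P, ω)-weight. Then: (i) for all γ, θ ∈ H such that wt_{(P,ω)}(a·γ) = wt_{(P,ω)}(a·θ) for all a ∈ S, there exists ψ ∈ GL_{(P,ω)}(H) with ψ(γ) = θ; (ii) if in addition H satisfies Condition (C), then H satisfies Condition (A), (H, P) satisfies Condition (B), and (H, (P,ω)) satisfies Condition (D). -/
def idl {Ω : Type*} [PartialOrder Ω] (B : Set Ω) : Set Ω := {a | ∃ b ∈ B, a ≤ b}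

def IsIdl {Ω : Type*} [PartialOrder Ω] (I : Set Ω) : Prop := ∀ a b : Ω, a ≤ b → b ∈ I → a ∈ I

noncomputable def lenP {Ω : Type*} [PartialOrder Ω] (y : Ω) : ℕ :=
  sSup {n : ℕ | ∃ c : Finset Ω, IsChain (· ≤ ·) (c : Set Ω) ∧ y ∈ c ∧ (∀ x ∈ c, x ≤ y) ∧ c.card = n}

def UDP {Ω : Type*} [PartialOrder Ω] (ω : Ω → ℝ) : Prop :=
  ∀ I J : Set Ω, IsIdl I → IsIdl J → (∑ᶠ i ∈ I, ω i) = (∑ᶠ j ∈ J, ω j) →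
    ∃ lam : Ω ≃o Ω, J = lam '' I ∧ ∀ i : Ω, ω (lam i) = ω i

def hsupp {Ω : Type*} {H : Ω → Type*} [∀ i, Zero (H i)] (β : ∀ i, H i) : Set Ω :=
  {i | β i ≠ 0}

noncomputable def wtw {Ω : Type*} [PartialOrder Ω] {H : Ω → Type*} [∀ i, Zero (H i)]
    (ω : Ω → ℝ) (β : ∀ i, H i) : ℝ :=
  ∑ᶠ i ∈ idl (hsupp β), ω i

def CondA (S : Type*) [Ring S] {Ω : Type*} (H : Ω → Type*)
    [∀ i, AddCommGroup (H i)] [∀ i, Module S (H i)] : Prop :=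
  ∀ i : Ω, ∀ B : Submodule S (H i), ∀ h : B →ₗ[S] H i, Function.Injective h →
    ∃ τ : H i ≃ₗ[S] H i, ∀ b : B, τ b = h b

def CondB (S : Type*) [Ring S] {Ω : Type*} [PartialOrder Ω] (H : Ω → Type*)
    [∀ i, AddCommGroup (H i)] [∀ i, Module S (H i)] : Prop :=
  ∀ k l : Ω, k ≤ l → k ≠ l →
    ∀ A : Submodule S (H l), ∀ f : A →ₗ[S] H k, ∃ g : H l →ₗ[S] H k, ∀ a : A, g a = f a

def CondC (S : Type*) [Ring S] {Ω : Type*} (H : Ω → Type*)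
    [∀ i, AddCommGroup (H i)] [∀ i, Module S (H i)] : Prop :=
  ∃ ξ : ∀ i, H i, ξ ≠ 0 ∧ ∀ k l : Ω, ∀ a : S, a • ξ k = 0 ↔ a • ξ l = 0

def CondD (S : Type*) [Ring S] {Ω : Type*} [PartialOrder Ω] (H : Ω → Type*)
    [∀ i, AddCommGroup (H i)] [∀ i, Module S (H i)] (ω : Ω → ℝ) : Prop :=
  UDP ω ∧ ∀ u v : Ω, lenP u = lenP v → ω u = ω v → Nonempty (H u ≃ₗ[S] H v)

def MEPweight (S : Type*) [Ring S] {Ω : Type*} [PartialOrder Ω] (H : Ω → Type*)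
    [∀ i, AddCommGroup (H i)] [∀ i, Module S (H i)] (ω : Ω → ℝ) : Prop :=
  ∀ C : Submodule S (∀ i, H i), ∀ f : C →ₗ[S] (∀ i, H i),
    (∀ x : C, wtw ω (f x) = wtw ω (x : ∀ i, H i)) →
    ∃ φ : (∀ i, H i) ≃ₗ[S] (∀ i, H i),
      (∀ α : ∀ i, H i, wtw ω (φ α) = wtw ω α) ∧ ∀ x : C, φ (x : ∀ i, H i) = f x

section aux
open Classical

variable {Ω : Type*} [Fintype Ω] [PartialOrder Ω]

lemma aux_msum (ω : Ω → ℝ) (I : Set Ω) :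
    (∑ᶠ i ∈ I, ω i) = ∑ i ∈ I.toFinset, ω i := finsum_mem_eq_toFinset_sum ω I

lemma aux_mono {ω : Ω → ℝ} (hω : ∀ i, 0 < ω i) {I J : Set Ω} (h : I ⊆ J) :
    (∑ᶠ i ∈ I, ω i) ≤ ∑ᶠ i ∈ J, ω i := by
  rw [aux_msum, aux_msum]
  exact Finset.sum_le_sum_of_subset_of_nonneg (Set.toFinset_subset_toFinset.2 h)
    (fun i _ _ => (hω i).le)

lemma aux_eq {ω : Ω → ℝ} (hω : ∀ i, 0 < ω i) {I J : Set Ω} (h : I ⊆ J)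
    (h2 : (∑ᶠ i ∈ J, ω i) ≤ ∑ᶠ i ∈ I, ω i) : I = J := by
  rw [aux_msum, aux_msum] at h2
  refine h.antisymm fun x hx => ?_
  by_contra hxI
  have := Finset.sum_lt_sum_of_subset (f := ω) (Set.toFinset_subset_toFinset.2 h)
    (i := x) (by simpa using hx) (by simpa using hxI) (hω x) (fun j _ _ => (hω j).le)
  linarith

lemma aux_idl_idl {I : Set Ω} (h : IsIdl I) : idl I = I := by
  ext a
  constructor
  · rintro ⟨b, hb, hab⟩
    exact h a b hab hb
  · intro ha
    exact ⟨a, ha, le_rfl⟩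

variable {S : Type*} [Ring S] {H : Ω → Type*} [∀ i, AddCommGroup (H i)] [∀ i, Module S (H i)]

lemma aux_Iic_sub {α : ∀ i, H i} {j : Ω} (h : α j ≠ 0) : Set.Iic j ⊆ idl (hsupp α) :=
  fun _ ha => ⟨j, h, ha⟩

lemma aux_top {α : ∀ i, H i} {j : Ω} (h : idl (hsupp α) = Set.Iic j) : α j ≠ 0 := by
  have h1 : j ∈ idl (hsupp α) := h ▸ Set.mem_Iic.2 le_rfl
  obtain ⟨b, hb, hjb⟩ := h1
  have h2 : b ∈ idl (hsupp α) := ⟨b, hb, le_rfl⟩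
  rw [h] at h2
  have : j = b := le_antisymm hjb h2
  rw [this]; exact hb

lemma aux_intro {α : ∀ i, H i} {j : Ω} (h : α j ≠ 0) (h2 : ∀ k, α k ≠ 0 → k ≤ j) :
    idl (hsupp α) = Set.Iic j := by
  refine Set.Subset.antisymm ?_ (aux_Iic_sub h)
  rintro a ⟨b, hb, hab⟩
  exact hab.trans (h2 b hb)

lemma aux_single {i : Ω} {x : H i} (hx : x ≠ 0) :
    idl (hsupp (Pi.single i x : ∀ i, H i)) = Set.Iic i := by
  refine aux_intro (by simpa using hx) fun k hk => ?_
  by_contra h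
  have : k ≠ i := fun e => h e.le
  exact hk (by simp [this])

lemma aux_wt_zero (ω : Ω → ℝ) : wtw ω (0 : ∀ i, H i) = 0 := by
  have : idl (hsupp (0 : ∀ i, H i)) = ∅ := by
    ext a; simp [idl, hsupp]
  rw [wtw, this]; simp

lemma aux_wt_eq_zero {ω : Ω → ℝ} (hω : ∀ i, 0 < ω i) {α : ∀ i, H i} (h : wtw ω α = 0) :
    α = 0 := by
  have : ∅ = idl (hsupp α) := aux_eq hω (Set.empty_subset _) (by rw [wtw] at h; simp [h])
  funext i
  by_contra hi
  have : i ∈ (∅ : Set Ω) := this ▸ ⟨i, hi, le_rfl⟩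
  exact this

/-- decomposition -/
lemma aux_P (ψ : (∀ i, H i) ≃ₗ[S] (∀ i, H i)) {α : ∀ i, H i} {j : Ω} (h : ψ α j ≠ 0) :
    ∃ i, α i ≠ 0 ∧ ψ (Pi.single i (α i)) j ≠ 0 := by
  have e : ψ α = ∑ i, ψ (Pi.single i (α i)) := by
    rw [← map_sum, Finset.univ_sum_single]
  rw [e, Finset.sum_apply] at h
  obtain ⟨i, -, hi⟩ := Finset.exists_ne_zero_of_sum_ne_zero h
  refine ⟨i, fun h0 => hi ?_, hi⟩
  simp [h0]

lemma aux_Q {ω : Ω → ℝ} (hω : ∀ i, 0 < ω i) (ψ : (∀ i, H i) ≃ₗ[S] (∀ i, H i))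
    (hψ : ∀ α, wtw ω (ψ α) = wtw ω α) {α : ∀ i, H i} {i : Ω}
    (h : idl (hsupp α) = Set.Iic i) :
    ∃ j, idl (hsupp (ψ α)) = Set.Iic j ∧
      (∑ᶠ k ∈ Set.Iic j, ω k) = ∑ᶠ k ∈ Set.Iic i, ω k := by
  have hi := aux_top h
  have h1 : ψ.symm (ψ α) i ≠ 0 := by simpa using hi
  obtain ⟨j, hj, hj2⟩ := aux_P ψ.symm h1
  have h2 := aux_mono hω (aux_Iic_sub hj2)
  have h3 := hψ (ψ.symm (Pi.single j (ψ α j)))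
  rw [LinearEquiv.apply_symm_apply, wtw, wtw, aux_single hj] at h3
  have h4 := hψ α
  rw [wtw, wtw, h] at h4
  have h5 := aux_eq hω (aux_Iic_sub hj) (by linarith)
  refine ⟨j, h5.symm, ?_⟩
  rw [h5, h4]

lemma aux_R {ω : Ω → ℝ} (hω : ∀ i, 0 < ω i) (hne : ∀ i, ∃ x : H i, x ≠ 0)
    (ψ : (∀ i, H i) ≃ₗ[S] (∀ i, H i))
    (hψ : ∀ α, wtw ω (ψ α) = wtw ω α) (i : Ω) :
    ∃ j, (∑ᶠ k ∈ Set.Iic j, ω k) = (∑ᶠ k ∈ Set.Iic i, ω k) ∧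
      ∀ α : ∀ i, H i, idl (hsupp α) = Set.Iic i → idl (hsupp (ψ α)) = Set.Iic j := by
  obtain ⟨x, hx⟩ := hne i
  obtain ⟨j, hj, hWj⟩ := aux_Q hω ψ hψ (aux_single hx)
  refine ⟨j, hWj, fun α hα => ?_⟩
  obtain ⟨j', hj', hWj'⟩ := aux_Q hω ψ hψ hα
  by_cases e : j = j'
  · rw [e]; exact hj'
  exfalso
  set β : ∀ i, H i := Pi.single i x with hβ
  have inc : ¬ j ≤ j' := fun hle => e (Set.Iic_injective
    (aux_eq hω (Set.Iic_subset_Iic.2 hle) (by linarith)))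
  have inc' : ¬ j' ≤ j := fun hle => e (Set.Iic_injective
    (aux_eq hω (Set.Iic_subset_Iic.2 hle) (by linarith))).symm
  have z1 : ψ α j = 0 := by
    by_contra h0
    have : j ∈ idl (hsupp (ψ α)) := ⟨j, h0, le_rfl⟩
    rw [hj'] at this
    exact inc this
  have z2 : ψ β j' = 0 := by
    by_contra h0
    have : j' ∈ idl (hsupp (ψ β)) := ⟨j', h0, le_rfl⟩
    rw [hj] at this
    exact inc' this
  have n1 : ψ (α + β) j ≠ 0 := by
    rw [map_add, Pi.add_apply, z1, zero_add]; exact aux_top hj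
  have n2 : ψ (α + β) j' ≠ 0 := by
    rw [map_add, Pi.add_apply, z2, add_zero]; exact aux_top hj'
  have hsub : idl (hsupp (α + β)) ⊆ Set.Iic i := by
    rintro a ⟨b, hb, hab⟩
    refine hab.trans ?_
    by_cases hb1 : α b = 0
    · have hb2 : β b ≠ 0 := fun h0 => hb (by simp [hb1, h0])
      have : b ∈ idl (hsupp β) := ⟨b, hb2, le_rfl⟩
      rw [aux_single hx] at this
      exact this
    · have : b ∈ idl (hsupp α) := ⟨b, hb1, le_rfl⟩
      rw [hα] at this
      exact this
  have h6 := hψ (α + β)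
  rw [wtw, wtw] at h6
  have h7 := aux_mono hω hsub
  have h8 := aux_eq hω (aux_Iic_sub n1) (by linarith)
  have : j' ∈ idl (hsupp (ψ (α + β))) := ⟨j', n2, le_rfl⟩
  rw [← h8] at this
  exact inc' this

lemma aux_monotone (hne : ∀ i, ∃ x : H i, x ≠ 0)
    (ψ : (∀ i, H i) ≃ₗ[S] (∀ i, H i)) (lam : Ω → Ω)
    (hl : ∀ i, ∀ α : ∀ i, H i, idl (hsupp α) = Set.Iic i →
      idl (hsupp (ψ α)) = Set.Iic (lam i)) {i j : Ω} (hij : i ≤ j) : lam i ≤ lam j := by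
  rcases hij.eq_or_lt with rfl | hlt
  · exact le_rfl
  obtain ⟨x, hx⟩ := hne i
  obtain ⟨y, hy⟩ := hne j
  have h1 : idl (hsupp (Pi.single i x + Pi.single j y : ∀ i, H i)) = Set.Iic j := by
    refine aux_intro ?_ ?_
    · simp [hlt.ne', hy]
    · intro k hk
      by_contra hkj
      have k1 : k ≠ j := fun e => hkj e.le
      have k2 : k ≠ i := fun e => hkj (e ▸ hij)
      exact hk (by simp [k1, k2])
  have e1 := hl j _ h1
  have e2 := hl j _ (aux_single hy)
  have e3 := aux_top (hl i _ (aux_single hx))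
  by_contra hcon
  have z1 : ψ (Pi.single i x + Pi.single j y) (lam i) = 0 := by
    by_contra h0
    have : lam i ∈ idl (hsupp (ψ (Pi.single i x + Pi.single j y))) := ⟨_, h0, le_rfl⟩
    rw [e1] at this
    exact hcon this
  have z2 : ψ (Pi.single j y) (lam i) = 0 := by
    by_contra h0
    have : lam i ∈ idl (hsupp (ψ (Pi.single j y))) := ⟨_, h0, le_rfl⟩
    rw [e2] at this
    exact hcon this
  rw [map_add, Pi.add_apply, z2, add_zero] at z1
  exact e3 z1

lemma aux_omega {ω : Ω → ℝ} (lam : Ω ≃o Ω)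
    (hW : ∀ i, (∑ᶠ k ∈ Set.Iic (lam i), ω k) = (∑ᶠ k ∈ Set.Iic i, ω k)) (i : Ω) :
    ω (lam i) = ω i := by
  induction i using WellFoundedLT.induction with
  | ind i ih =>
    have h := hW i
    rw [← OrderIso.image_Iic, finsum_mem_image lam.injective.injOn, ← Set.Iio_insert,
      finsum_mem_insert _ (by simp) (Set.toFinite _),
      finsum_mem_insert _ (by simp) (Set.toFinite _),
      finsum_mem_congr (s := Set.Iio i) rfl (fun k hk => ih k hk)] at h
    exact add_right_cancel h

lemma aux_core {ω : Ω → ℝ} (hω : ∀ i, 0 < ω i) (hne : ∀ i, ∃ x : H i, x ≠ 0)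
    (ψ : (∀ i, H i) ≃ₗ[S] (∀ i, H i)) (hψ : ∀ α, wtw ω (ψ α) = wtw ω α) :
    ∃ lam : Ω ≃o Ω, (∀ i, ω (lam i) = ω i) ∧
      (∀ i, ∀ α : ∀ i, H i, idl (hsupp α) = Set.Iic i →
        idl (hsupp (ψ α)) = Set.Iic (lam i)) ∧
      ∀ i, ∃ τ : H i ≃ₗ[S] H (lam i), ∀ x, τ x = ψ (Pi.single i x) (lam i) := by
  have hψ' : ∀ α, wtw ω (ψ.symm α) = wtw ω α := fun α => by
    rw [← hψ (ψ.symm α), LinearEquiv.apply_symm_apply]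
  choose lam hW hl using aux_R hω hne ψ hψ
  choose mu hW' hl' using aux_R hω hne ψ.symm hψ'
  have ml : ∀ i, mu (lam i) = i := fun i => by
    obtain ⟨x, hx⟩ := hne i
    have h := hl' _ _ (hl i _ (aux_single hx))
    rw [LinearEquiv.symm_apply_apply, aux_single hx] at h
    exact (Set.Iic_injective h).symm
  have lm : ∀ i, lam (mu i) = i := fun i => by
    obtain ⟨x, hx⟩ := hne i
    have h := hl _ _ (hl' i _ (aux_single hx))
    rw [LinearEquiv.apply_symm_apply, aux_single hx] at h
    exact (Set.Iic_injective h).symm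
  let L : Ω ≃o Ω :=
    { toFun := lam, invFun := mu, left_inv := ml, right_inv := lm
      map_rel_iff' := by
        intro a b
        constructor
        · intro hab
          have := aux_monotone hne ψ.symm mu hl' hab
          simpa [ml] using this
        · exact fun hab => aux_monotone hne ψ lam hl hab }
  refine ⟨L, aux_omega L hW, hl, fun i => ?_⟩
  let t : H i →ₗ[S] H (lam i) :=
    (LinearMap.proj (lam i)).comp (ψ.toLinearMap.comp (LinearMap.single S H i))
  have ht : ∀ x, t x = ψ (Pi.single i x) (lam i) := fun x => rfl
  have inj : Function.Injective t := by
    refine (injective_iff_map_eq_zero t).2 fun x h0 => ?_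
    by_contra hx
    exact aux_top (hl i _ (aux_single hx)) h0
  have surj : Function.Surjective t := by
    intro y
    by_cases hy : y = 0
    · exact ⟨0, by rw [map_zero, hy]⟩
    set α := ψ.symm (Pi.single (lam i) y) with hα
    have h1 : idl (hsupp α) = Set.Iic i := by
      rw [hα, hl' _ _ (aux_single hy), ml]
    refine ⟨α i, ?_⟩
    have h2 : ψ (α - Pi.single i (α i)) (lam i) = 0 := by
      by_contra h0
      obtain ⟨k, hk, hk2⟩ := aux_P ψ h0
      have hki : k ≠ i := by rintro rfl; exact hk (by simp)
      have hk3 : α k ≠ 0 := by simpa [hki] using hk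
      have hk4 : k ∈ Set.Iic i := h1 ▸ ⟨k, hk3, le_rfl⟩
      have hk5 : lam i ∈ Set.Iic (lam k) := by
        rw [← hl k _ (aux_single hk)]
        exact ⟨_, hk2, le_rfl⟩
      have hk6 : i ≤ k := L.le_iff_le.1 hk5
      exact hki (le_antisymm hk4 hk6)
    rw [map_sub, Pi.sub_apply, sub_eq_zero] at h2
    rw [ht, ← h2, hα, LinearEquiv.apply_symm_apply, Pi.single_eq_same]
  exact ⟨LinearEquiv.ofBijective t ⟨inj, surj⟩, ht⟩

lemma aux_i {ω : Ω → ℝ} (hω : ∀ i, 0 < ω i) (hMEP : MEPweight S H ω)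
    (γ θ : ∀ i, H i) (h : ∀ a : S, wtw ω (a • γ) = wtw ω (a • θ)) :
    ∃ ψ : (∀ i, H i) ≃ₗ[S] (∀ i, H i),
        (∀ α : ∀ i, H i, wtw ω (ψ α) = wtw ω α) ∧ ψ γ = θ := by
  have key : ∀ a : S, a • γ = 0 → a • θ = 0 := fun a ha => by
    apply aux_wt_eq_zero hω
    rw [← h a, ha, aux_wt_zero]
  have key2 : ∀ a b : S, a • γ = b • γ → a • θ = b • θ := fun a b hab => by
    rw [← sub_eq_zero, ← sub_smul]
    apply key
    rw [sub_smul, hab, sub_self]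
  have hc : ∀ x : Submodule.span S {γ}, ∃ a : S, a • γ = x := fun x =>
    Submodule.mem_span_singleton.1 x.2
  choose c hc using hc
  let f : Submodule.span S {γ} →ₗ[S] (∀ i, H i) :=
    { toFun := fun x => c x • θ
      map_add' := fun x y => by
        rw [← add_smul]
        apply key2
        rw [add_smul, hc, hc, hc]; rfl
      map_smul' := fun r x => by
        simp only [RingHom.id_apply]
        rw [← mul_smul]
        apply key2
        rw [mul_smul, hc, hc]; rfl }
  obtain ⟨φ, h1, h2⟩ := hMEP _ f (fun x => by
    change wtw ω (c x • θ) = _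
    rw [← h, hc])
  refine ⟨φ, h1, ?_⟩
  have h3 := h2 ⟨γ, Submodule.mem_span_singleton_self γ⟩
  rw [h3]
  change c _ • θ = θ
  conv_rhs => rw [← one_smul S θ]
  apply key2
  rw [hc, one_smul]

lemma aux_udp {ω : Ω → ℝ} (hω : ∀ i, 0 < ω i) (hMEP : MEPweight S H ω)
    (hne : ∀ i, ∃ x : H i, x ≠ 0) (ξ : ∀ i, H i) (hξ : ∀ i, ξ i ≠ 0)
    (hC : ∀ k l : Ω, ∀ a : S, a • ξ k = 0 ↔ a • ξ l = 0)
    (I J : Set Ω) (hI : IsIdl I) (hJ : IsIdl J)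
    (h : (∑ᶠ i ∈ I, ω i) = (∑ᶠ j ∈ J, ω j)) :
    ∃ lam : Ω ≃o Ω, J = lam '' I ∧ (∀ i : Ω, ω (lam i) = ω i) ∧
      ∀ i, Nonempty (H i ≃ₗ[S] H (lam i)) := by
  let g : Set Ω → ∀ i, H i := fun K i => if i ∈ K then ξ i else 0
  have g0 : ∀ (a : S) (k : Ω), a • ξ k = 0 → ∀ K, a • g K = 0 := by
    intro a k hk K
    funext i
    by_cases hi : i ∈ K
    · simpa [g, hi] using (hC k i a).1 hk
    · simp [g, hi]
  have g1 : ∀ (a : S) (k : Ω), a • ξ k ≠ 0 → ∀ K, hsupp (a • g K) = K := by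
    intro a k hk K
    ext i
    have := (not_congr (hC k i a)).1 hk
    by_cases hi : i ∈ K
    · simpa [g, hi, hsupp] using this
    · simp [g, hi, hsupp]
  obtain ⟨ψ, hψ, hψ2⟩ := aux_i hω hMEP (g I) (g J) (fun a => by
    by_cases ha : ∃ k, a • ξ k = 0
    · obtain ⟨k, hk⟩ := ha
      rw [g0 a k hk, g0 a k hk]
    · push Not at ha
      by_cases hO : Nonempty Ω
      · obtain ⟨k⟩ := hO
        rw [wtw, wtw, g1 a k (ha k), g1 a k (ha k), aux_idl_idl hI, aux_idl_idl hJ, h]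
      · congr 1
        funext i
        exact absurd ⟨i⟩ hO)
  obtain ⟨lam, h1, h2, h3⟩ := aux_core hω hne ψ hψ
  refine ⟨lam, ?_, h1, fun i => ⟨(h3 i).choose⟩⟩
  have hsub : J ⊆ lam '' I := by
    intro j hj
    have hj0 : ψ (g I) j ≠ 0 := by
      rw [hψ2]; simpa [g, hj] using hξ j
    obtain ⟨i, hi, hi2⟩ := aux_P ψ hj0
    have hiI : i ∈ I := by
      by_contra hn
      exact hi (by simp [g, hn])
    have hji : j ∈ Set.Iic (lam i) := by
      rw [← h2 i _ (aux_single hi)]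
      exact ⟨_, hi2, le_rfl⟩
    refine ⟨lam.symm j, hI _ i ?_ hiI, by simp⟩
    rw [OrderIso.symm_apply_le]; exact hji
  refine aux_eq hω hsub ?_
  rw [finsum_mem_image lam.injective.injOn, finsum_mem_congr rfl (fun k _ => h1 k), h]

lemma aux_len_bdd (y : Ω) : BddAbove {n : ℕ | ∃ c : Finset Ω,
    IsChain (· ≤ ·) (c : Set Ω) ∧ y ∈ c ∧ (∀ x ∈ c, x ≤ y) ∧ c.card = n} := by
  refine ⟨Fintype.card Ω, ?_⟩
  rintro n ⟨c, -, -, -, rfl⟩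
  exact Finset.card_le_univ c

lemma aux_len_mem (y : Ω) : ∃ c : Finset Ω,
    IsChain (· ≤ ·) (c : Set Ω) ∧ y ∈ c ∧ (∀ x ∈ c, x ≤ y) ∧ c.card = lenP y := by
  have := Nat.sSup_mem (s := {n : ℕ | ∃ c : Finset Ω,
    IsChain (· ≤ ·) (c : Set Ω) ∧ y ∈ c ∧ (∀ x ∈ c, x ≤ y) ∧ c.card = n})
    ⟨1, {y}, by simp, by simp, by simp, by simp⟩ (aux_len_bdd y)
  exact this

lemma aux_len_lt {a b : Ω} (h : a < b) : lenP a < lenP b := by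
  obtain ⟨c, h1, h2, h3, h4⟩ := aux_len_mem a
  have hb : b ∉ c := fun hb => absurd (h3 b hb) (not_le_of_gt h)
  have : lenP a + 1 ≤ lenP b := by
    refine le_csSup (aux_len_bdd b) ⟨insert b c, ?_, by simp, ?_, ?_⟩
    · rw [Finset.coe_insert]
      exact h1.insert fun x hx _ => Or.inr ((h3 x hx).trans h.le)
    · intro x hx
      rcases Finset.mem_insert.1 hx with rfl | hx
      · exact le_rfl
      · exact (h3 x hx).trans h.le
    · rw [Finset.card_insert_of_notMem hb, h4]
  exact this

lemma aux_len_le (lam : Ω ≃o Ω) (y : Ω) : lenP y ≤ lenP (lam y) := by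
  obtain ⟨c, h1, h2, h3, h4⟩ := aux_len_mem y
  refine le_csSup (aux_len_bdd _) ⟨c.map lam.toEquiv.toEmbedding, ?_, ?_, ?_, ?_⟩
  · intro x hx z hz hxz
    simp only [Finset.coe_map, Set.mem_image] at hx hz
    obtain ⟨x, hx, rfl⟩ := hx
    obtain ⟨z, hz, rfl⟩ := hz
    have := h1 hx hz (fun e => hxz (by rw [e]))
    simpa using this
  · simpa using h2
  · intro x hx
    obtain ⟨x', hx', rfl⟩ := Finset.mem_map.1 hx
    simpa using h3 x' hx'
  · rw [Finset.card_map, h4]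

lemma aux_ii {ω : Ω → ℝ} (hω : ∀ i, 0 < ω i) (hMEP : MEPweight S H ω)
    (hC : CondC S H) : CondA S H ∧ CondB S H ∧ CondD S H ω := by
  obtain ⟨ξ, hξ0, hC⟩ := hC
  have hξ : ∀ i, ξ i ≠ 0 := by
    intro i hi
    apply hξ0
    funext k
    have := (hC i k 1).1 (by simpa using hi)
    simpa using this
  have hne : ∀ i, ∃ x : H i, x ≠ 0 := fun i => ⟨ξ i, hξ i⟩
  -- general extension tool
  have tool : ∀ (l : Ω) (A : Submodule S (H l)) (F : A →ₗ[S] (∀ i, H i)),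
      (∀ a : A, (a : H l) ≠ 0 → idl (hsupp (F a)) = Set.Iic l) →
      ∃ φ : (∀ i, H i) ≃ₗ[S] (∀ i, H i),
        (∀ α : ∀ i, H i, wtw ω (φ α) = wtw ω α) ∧
        ∀ a : A, φ (Pi.single l (a : H l)) = F a := by
    intro l A F hF
    have hmem : ∀ x : A.map (LinearMap.single S H l),
        (LinearMap.proj (R := S) l) (x : ∀ i, H i) ∈ A := by
      rintro ⟨x, hx⟩
      obtain ⟨a, ha, rfl⟩ := Submodule.mem_map.1 hx
      simpa using ha
    let p : A.map (LinearMap.single S H l) →ₗ[S] A :=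
      LinearMap.codRestrict A ((LinearMap.proj (R := S) l).comp (Submodule.subtype _)) hmem
    have hpv : ∀ x, ((p x : A) : H l) = (x : ∀ i, H i) l := fun _ => rfl
    have hp : ∀ x : A.map (LinearMap.single S H l),
        (x : ∀ i, H i) = Pi.single l ((p x : A) : H l) := by
      rintro ⟨x, hx⟩
      obtain ⟨a, ha, rfl⟩ := Submodule.mem_map.1 hx
      rw [hpv]; simp
    obtain ⟨φ, h1, h2⟩ := hMEP _ (F.comp p) (fun x => by
      rw [hp x, LinearMap.comp_apply]
      by_cases h0 : ((p x : A) : H l) = 0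
      · have : p x = 0 := Subtype.ext h0
        rw [this]; simp
      · rw [wtw, wtw, hF _ h0, aux_single h0])
    refine ⟨φ, h1, fun a => ?_⟩
    have h3 := h2 ⟨Pi.single l (a : H l), Submodule.mem_map.2 ⟨a, a.2, rfl⟩⟩
    rw [h3, LinearMap.comp_apply]
    congr 1
    apply Subtype.ext
    rw [hpv]; simp
  refine ⟨?_, ?_, ?_, ?_⟩
  · intro i B h hinj
    by_cases hB : ∃ b : B, (b : H i) ≠ 0
    · obtain ⟨b, hb⟩ := hB
      have hF : ∀ a : B, (a : H i) ≠ 0 →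
          idl (hsupp ((LinearMap.single S H i ∘ₗ h) a)) = Set.Iic i := by
        intro a ha
        refine aux_single fun h0 => ha ?_
        have : a = 0 := hinj (by rw [h0, map_zero])
        rw [this]; rfl
      obtain ⟨φ, h1, h2⟩ := tool i B (LinearMap.single S H i ∘ₗ h) hF
      obtain ⟨lam, -, l2, l3⟩ := aux_core hω hne φ h1
      have e : lam i = i := by
        have := l2 i _ (aux_single hb)
        rw [h2, hF b hb] at this
        exact (Set.Iic_injective this).symm
      have l3i := l3 i
      rw [e] at l3i
      obtain ⟨τ, hτ⟩ := l3i
      refine ⟨τ, fun b => ?_⟩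
      rw [hτ, h2]
      simp
    · push Not at hB
      refine ⟨LinearEquiv.refl S _, fun b => ?_⟩
      have : b = 0 := Subtype.ext (hB b)
      rw [this]; simp
  · intro k l hkl hne' A f
    obtain ⟨φ, h1, h2⟩ := tool l A
      (LinearMap.single S H l ∘ₗ A.subtype + LinearMap.single S H k ∘ₗ f) (by
        intro a ha
        refine aux_intro ?_ ?_
        · simpa [hne'.symm] using ha
        · intro m hm
          by_contra hml
          have k1 : m ≠ l := fun e => hml e.le
          have k2 : m ≠ k := fun e => hml (e ▸ hkl)
          exact hm (by simp [k1, k2]))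
    refine ⟨(LinearMap.proj k).comp (φ.toLinearMap.comp (LinearMap.single S H l)), fun a => ?_⟩
    have := congrFun (h2 a) k
    simpa [hne'] using this
  · intro I J hI hJ h
    obtain ⟨lam, h1, h2, -⟩ := aux_udp hω hMEP hne ξ hξ hC I J hI hJ h
    exact ⟨lam, h1, h2⟩
  · intro u v huv hωuv
    have hid : ∀ w : Ω, IsIdl (insert w {x : Ω | lenP x < lenP w}) := by
      intro w a b hab hb
      have hab' : lenP a ≤ lenP b := by
        rcases hab.eq_or_lt with rfl | hlt
        · exact le_rfl
        · exact (aux_len_lt hlt).le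
      rcases hb with rfl | hb
      · rcases hab.eq_or_lt with rfl | hlt
        · exact Or.inl rfl
        · exact Or.inr (aux_len_lt hlt)
      · exact Or.inr (lt_of_le_of_lt hab' hb)
    obtain ⟨lam, h1, h2, h3⟩ := aux_udp hω hMEP hne ξ hξ hC _ _ (hid u) (hid v) (by
      rw [finsum_mem_insert _ (by simp) (Set.toFinite _),
        finsum_mem_insert _ (by simp) (Set.toFinite _), huv, hωuv])
    have hu : lam u ∈ insert v {x : Ω | lenP x < lenP v} := by
      rw [h1]; exact ⟨u, Set.mem_insert _ _, rfl⟩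
    have e : lam u = v := by
      rcases hu with hu | hu
      · exact hu
      · have := aux_len_le lam u
        rw [huv] at this
        exact absurd hu (not_lt_of_ge this)
    rw [← e]
    exact h3 u

end aux

theorem stmt16 {Ω : Type*} [Fintype Ω] [Nonempty Ω] [PartialOrder Ω]
    {S : Type*} [Ring S] {H : Ω → Type*} [∀ i, AddCommGroup (H i)] [∀ i, Module S (H i)]
    (ω : Ω → ℝ) (hω : ∀ i : Ω, 0 < ω i)
    (hMEP : MEPweight S H ω) :
    -- (i)
    (∀ γ θ : ∀ i, H i, (∀ a : S, wtw ω (a • γ) = wtw ω (a • θ)) →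
      ∃ ψ : (∀ i, H i) ≃ₗ[S] (∀ i, H i),
        (∀ α : ∀ i, H i, wtw ω (ψ α) = wtw ω α) ∧ ψ γ = θ) ∧
    -- (ii)
    (CondC S H → CondA S H ∧ CondB S H ∧ CondD S H ω) := by
  exact ⟨aux_i hω hMEP, aux_ii hω hMEP⟩
end

section
/- Let 𝔽 be a finite field with q elements, let (k_i)_{i∈Ω} be a family of positive integers, and let H = ∏_{i∈Ω} 𝔽^{k_i}. Then H satisfies the MacWilliams extension property for P-weight if and only if (H, P) satisfies Condition (E) and, for every r ∈ [1, m], either k_i = 1 for all i ∈ W_r or |W_r| ≤ q. -/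
noncomputable def maxChainCard (Ω : Type*) [PartialOrder Ω] : ℕ :=
  sSup {n : ℕ | ∃ c : Finset Ω, IsChain (· ≤ ·) (c : Set Ω) ∧ c.card = n}

def Hierarchical (Ω : Type*) [PartialOrder Ω] : Prop :=
  ∀ u v : Ω, lenP u + 1 ≤ lenP v → u ≤ v

def Wset {Ω : Type*} [PartialOrder Ω] (r : ℕ) : Set Ω := {u | lenP u = r}

/-- The `P`-weight of `β`. -/
noncomputable def wtP {Ω : Type*} [PartialOrder Ω] {H : Ω → Type*} [∀ i, Zero (H i)]
    (β : ∀ i, H i) : ℕ :=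
  Set.ncard (idl (hsupp β))

/-- The MacWilliams extension property for `P`-weight. -/
def MEPP (S : Type*) [Ring S] {Ω : Type*} [PartialOrder Ω] (H : Ω → Type*)
    [∀ i, AddCommGroup (H i)] [∀ i, Module S (H i)] : Prop :=
  ∀ C : Submodule S (∀ i, H i), ∀ f : C →ₗ[S] (∀ i, H i),
    (∀ x : C, wtP (f x) = wtP (x : ∀ i, H i)) →
    ∃ φ : (∀ i, H i) ≃ₗ[S] (∀ i, H i),
      (∀ α : ∀ i, H i, wtP (φ α) = wtP α) ∧ ∀ x : C, φ (x : ∀ i, H i) = f x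

/-- Condition (E). -/
def CondE (S : Type*) [Ring S] {Ω : Type*} [PartialOrder Ω] (H : Ω → Type*)
    [∀ i, AddCommGroup (H i)] [∀ i, Module S (H i)] : Prop :=
  Hierarchical Ω ∧ ∀ u v : Ω, lenP u = lenP v → Nonempty (H u ≃ₗ[S] H v)



namespace MEPaux
open Module

lemma q_mul_card_le {𝔽 M : Type*} [Field 𝔽] [Fintype 𝔽] [AddCommGroup M] [Module 𝔽 M] [Finite M]
    (p : Submodule 𝔽 M) (hp : p ≠ ⊤) : Fintype.card 𝔽 * Nat.card p ≤ Nat.card M := by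
  have h := Submodule.card_eq_card_quotient_mul_card p
  rw [h, mul_comm (Nat.card p)]
  apply Nat.mul_le_mul_right
  obtain ⟨x, hx⟩ : ∃ x, x ∉ p := by
    by_contra hcon
    push Not at hcon
    exact hp (by ext; simp [hcon])
  have hx0 : (p.mkQ x) ≠ 0 := by simpa using hx
  have : Function.Injective (fun a : 𝔽 => a • p.mkQ x) := fun a b hab => by
    exact smul_left_injective 𝔽 hx0 hab
  have h2 : Finite (M ⧸ p) := Finite.of_surjective p.mkQ p.mkQ_surjective
  rw [← Nat.card_eq_fintype_card]
  exact Nat.card_le_card_of_injective _ this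

lemma cover {𝔽 M ι : Type*} [Field 𝔽] [Fintype 𝔽] [AddCommGroup M] [Module 𝔽 M] [Finite M]
    (s : Finset ι) (p : ι → Submodule 𝔽 M) (hp : ∀ i ∈ s, p i ≠ ⊤)
    (hs : s.card ≤ Fintype.card 𝔽) : ∃ x, ∀ i ∈ s, x ∉ p i := by
  classical
  by_contra hcon
  push Not at hcon
  have := Fintype.ofFinite M
  obtain ⟨j, hj, -⟩ := hcon 0
  have hq : 1 < Fintype.card 𝔽 := Fintype.one_lt_card
  have hM := q_mul_card_le (p j) (hp j hj)
  have hpos : ∀ i, 0 < Nat.card (p i) := fun i => Nat.card_pos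
  have hsub : (Finset.univ.erase (0 : M)) ⊆
      s.biUnion (fun i => (Finset.univ.filter (fun x => x ∈ p i)).erase 0) := by
    intro x hx
    obtain ⟨i, hi, hxi⟩ := hcon x
    simp only [Finset.mem_biUnion, Finset.mem_erase, Finset.mem_filter]
    exact ⟨i, hi, (Finset.mem_erase.1 hx).1, Finset.mem_univ _, hxi⟩
  have h1 := (Finset.card_le_card hsub).trans Finset.card_biUnion_le
  rw [Finset.card_erase_of_mem (Finset.mem_univ _), Finset.card_univ] at h1
  have h2 : ∀ i ∈ s, Fintype.card 𝔽 * ((Finset.univ.filter (fun x => x ∈ p i)).erase 0).card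
      ≤ Fintype.card M - Fintype.card 𝔽 := by
    intro i hi
    have h3 := q_mul_card_le (p i) (hp i hi)
    rw [Finset.card_erase_of_mem (by simp)]
    have : (Finset.univ.filter (fun x => x ∈ p i)).card = Nat.card (p i) := by
      rw [Nat.card_eq_fintype_card, Fintype.card_subtype]
    rw [this, Nat.mul_sub, mul_one]
    rw [Nat.card_eq_fintype_card (α := M)] at h3
    omega
  have h4 : Fintype.card 𝔽 * (Fintype.card M - 1) ≤ Fintype.card 𝔽 * (Fintype.card M - Fintype.card 𝔽) := by
    calc _ ≤ Fintype.card 𝔽 * ∑ i ∈ s, ((Finset.univ.filter (fun x => x ∈ p i)).erase 0).card :=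
          Nat.mul_le_mul_left _ h1
      _ = ∑ i ∈ s, Fintype.card 𝔽 * ((Finset.univ.filter (fun x => x ∈ p i)).erase 0).card := by
          rw [Finset.mul_sum]
      _ ≤ ∑ i ∈ s, (Fintype.card M - Fintype.card 𝔽) := Finset.sum_le_sum h2
      _ ≤ _ := by rw [Finset.sum_const, smul_eq_mul]; exact Nat.mul_le_mul_right _ hs
  have h5 := Nat.le_of_mul_le_mul_left h4 (by omega)
  rw [Nat.card_eq_fintype_card (α := M)] at hM
  have : Fintype.card 𝔽 * 1 ≤ Fintype.card 𝔽 * Nat.card (p j) := Nat.mul_le_mul_left _ (hpos j)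
  omega

lemma ext_iso {𝔽 V A B : Type*} [Field 𝔽] [AddCommGroup V] [Module 𝔽 V] [AddCommGroup A]
    [Module 𝔽 A] [AddCommGroup B] [Module 𝔽 B] [FiniteDimensional 𝔽 A] (e : A ≃ₗ[𝔽] B)
    (l : V →ₗ[𝔽] A) (m : V →ₗ[𝔽] B) (h : LinearMap.ker l = LinearMap.ker m) :
    ∃ g : A ≃ₗ[𝔽] B, ∀ x, g (l x) = m x := by
  let m' : V →ₗ[𝔽] A := e.symm.toLinearMap ∘ₗ m
  have hm' : LinearMap.ker l = LinearMap.ker m' := by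
    rw [h]; ext x; simp [m']
  let f : LinearMap.range l ≃ₗ[𝔽] LinearMap.range m' :=
    l.quotKerEquivRange.symm ≪≫ₗ (Submodule.quotEquivOfEq _ _ hm') ≪≫ₗ m'.quotKerEquivRange
  obtain ⟨g, hg⟩ := Submodule.exists_linearEquiv_restrict_eq f
  refine ⟨g ≪≫ₗ e, fun x => ?_⟩
  have h1 := hg ⟨l x, x, rfl⟩
  have h2 : (f ⟨l x, x, rfl⟩ : A) = m' x := by
    have : l.quotKerEquivRange.symm ⟨l x, x, rfl⟩ = Submodule.Quotient.mk x := by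
      rw [LinearEquiv.symm_apply_eq]; rfl
    simp only [f, LinearEquiv.trans_apply, this]
    rfl
  simp only [LinearEquiv.trans_apply]
  rw [← h1, h2]; simp [m']

lemma filt_proj {𝔽 V : Type*} [Field 𝔽] [AddCommGroup V] [Module 𝔽 V]
    (F : ℕ → Submodule 𝔽 V) (hF : Monotone F) (C : Submodule 𝔽 V) (hF0 : F 0 = ⊥) (r : ℕ) :
    ∃ p : V →ₗ[𝔽] V, (∀ x, p x ∈ C ⊓ F r) ∧ (∀ x ∈ C ⊓ F r, p x = x) ∧
      ∀ s, ∀ x ∈ F s, p x ∈ F s := by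
  induction r with
  | zero =>
    refine ⟨0, fun x => by simp, fun x hx => ?_, fun s x hx => by simp⟩
    rw [hF0] at hx; simp at hx; simp [hx]
  | succ r ih =>
    obtain ⟨p, h1, h2, h3⟩ := ih
    have hle : C ⊓ F r ≤ C ⊓ F (r+1) := inf_le_inf_left _ (hF (Nat.le_succ r))
    obtain ⟨D', hD'⟩ := Submodule.exists_isCompl (C ⊓ F r)
    set D := D' ⊓ (C ⊓ F (r+1)) with hD
    have hdis : Disjoint (F r) D := by
      rw [Submodule.disjoint_def]
      intro x hx hxD
      exact (Submodule.disjoint_def.1 hD'.disjoint) x ⟨hxD.2.1, hx⟩ hxD.1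
    obtain ⟨Q, hQ, hc⟩ := hdis.exists_isCompl
    let e : V →ₗ[𝔽] V := D.subtype ∘ₗ Submodule.projectionOnto D Q hc.symm
    have he1 : ∀ x, e x ∈ D := fun x => by simp [e]
    have he2 : ∀ x ∈ D, e x = x := fun x hx => by
      have := Submodule.projectionOnto_apply_left hc.symm ⟨x, hx⟩
      simp [e, this]
    have he3 : ∀ x ∈ F r, e x = 0 := fun x hx => by
      have := Submodule.projectionOnto_apply_right hc.symm ⟨x, hQ hx⟩
      simp [e, this]
    refine ⟨p ∘ₗ (LinearMap.id - e) + e, fun x => ?_, fun x hx => ?_, fun s x hx => ?_⟩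
    · exact add_mem (hle (h1 _)) (he1 x).2
    · obtain ⟨a, ha, b, hb, rfl⟩ : ∃ a ∈ C ⊓ F r, ∃ b ∈ D', a + b = x := by
        have : x ∈ (C ⊓ F r) ⊔ D' := by rw [hD'.sup_eq_top]; trivial
        exact Submodule.mem_sup.1 this
      have hbD : b ∈ D := ⟨hb, by simpa using sub_mem hx (hle ha)⟩
      simp [he2 b hbD, he3 a ha.2, h2 a ha]
    · rcases le_or_gt s r with hs | hs
      · have := he3 x (hF hs hx)
        simpa [this] using h3 s x hx
      · have : p ((LinearMap.id - e : V →ₗ[𝔽] V) x) + e x ∈ C ⊓ F (r+1) :=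
          add_mem (hle (h1 _)) (he1 x).2
        exact hF hs this.2

end MEPaux

namespace MEPaux
open Module

lemma q_mul_ker {𝔽 V A : Type*} [Field 𝔽] [Fintype 𝔽] [AddCommGroup V] [Module 𝔽 V] [Finite V]
    [AddCommGroup A] [Module 𝔽 A] (e : A ≃ₗ[𝔽] 𝔽) (l : V →ₗ[𝔽] A) (hl : l ≠ 0) :
    Fintype.card 𝔽 * Nat.card (LinearMap.ker l) = Nat.card V := by
  let l' : V →ₗ[𝔽] 𝔽 := e.toLinearMap ∘ₗ l
  have hl' : l' ≠ 0 := by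
    intro h; apply hl; ext x
    have := LinearMap.congr_fun h x
    simpa [l'] using this
  have hk : LinearMap.ker l = LinearMap.ker l' := by ext x; simp [l']
  have hs : Function.Surjective l' := LinearMap.surjective hl'
  rw [hk, Submodule.card_eq_card_quotient_mul_card (LinearMap.ker l'), mul_comm,
    Nat.card_congr (l'.quotKerEquivOfSurjective hs).toEquiv, Nat.card_eq_fintype_card (α := 𝔽)]

open Classical in
lemma count1 {𝔽 V ι : Type*} [Field 𝔽] [Fintype 𝔽] [AddCommGroup V] [Module 𝔽 V] [Finite V]
    [Fintype ι] (A : ι → Type*) [∀ i, AddCommGroup (A i)] [∀ i, Module 𝔽 (A i)]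
    (hA : ∀ i, Nonempty (A i ≃ₗ[𝔽] 𝔽))
    (l : ∀ i, V →ₗ[𝔽] A i) (U : Submodule 𝔽 V) :
    Fintype.card 𝔽 * Nat.card {p : ι × U // l p.1 p.2 = 0} =
      Nat.card U * ((Fintype.card 𝔽 - 1) * (Finset.univ.filter (fun i => U ≤ LinearMap.ker (l i))).card
        + Fintype.card ι) := by
  have hfin : Fintype V := Fintype.ofFinite V
  have hq : 1 < Fintype.card 𝔽 := Fintype.one_lt_card
  let E : {p : ι × U // l p.1 p.2 = 0} ≃ Σ i, LinearMap.ker ((l i) ∘ₗ U.subtype) :=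
    { toFun := fun p => ⟨p.1.1, p.1.2, by simpa using p.2⟩
      invFun := fun p => ⟨(p.1, p.2.1), LinearMap.mem_ker.1 p.2.2⟩
      left_inv := fun _ => rfl
      right_inv := fun _ => rfl }
  rw [Nat.card_congr E, Nat.card_sigma, Finset.mul_sum]
  have : ∀ i, Fintype.card 𝔽 * Nat.card (LinearMap.ker ((l i) ∘ₗ U.subtype)) =
      Nat.card U * ((if U ≤ LinearMap.ker (l i) then (Fintype.card 𝔽 - 1) else 0) + 1) := by
    intro i
    split_ifs with h
    · have : (l i) ∘ₗ U.subtype = 0 := by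
        ext x; exact h x.2
      rw [this, LinearMap.ker_zero, mul_comm, Nat.sub_add_cancel hq.le]
      congr 1
      exact Nat.card_congr (Equiv.Set.univ _)
    · rw [zero_add, mul_one]
      refine q_mul_ker (hA i).some _ ?_
      intro h0; apply h
      intro x hx
      exact LinearMap.congr_fun h0 ⟨x, hx⟩
  rw [Finset.sum_congr rfl (fun i _ => this i), ← Finset.mul_sum, Finset.sum_add_distrib,
    ← Finset.sum_filter]
  simp [mul_comm]

open Classical in
lemma count2 {𝔽 V ι : Type*} [Field 𝔽] [Fintype 𝔽] [AddCommGroup V] [Module 𝔽 V] [Finite V]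
    [Fintype ι] (A : ι → Type*) [∀ i, AddCommGroup (A i)] [∀ i, Module 𝔽 (A i)]
    (hA : Fintype.card ι ≤ Fintype.card 𝔽)
    (l m : ∀ i, V →ₗ[𝔽] A i) (U : Submodule 𝔽 V)
    (h : ∀ x, (Finset.univ.filter (fun i => l i x = 0)).card =
      (Finset.univ.filter (fun i => m i x = 0)).card) :
    (Finset.univ.filter (fun i => U ≤ LinearMap.ker (l i))).card ≤
    (Finset.univ.filter (fun i => U ≤ LinearMap.ker (m i))).card := by
  obtain ⟨x, hx⟩ := cover (𝔽 := 𝔽) (M := U)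
    (Finset.univ.filter (fun i => ¬ U ≤ LinearMap.ker (m i)))
    (fun i => LinearMap.ker ((m i) ∘ₗ U.subtype)) (by
      intro i hi h0
      rw [Finset.mem_filter] at hi
      apply hi.2
      intro y hy
      have : (⟨y, hy⟩ : U) ∈ LinearMap.ker ((m i) ∘ₗ U.subtype) := by rw [h0]; trivial
      simpa using this) ((Finset.card_le_univ _).trans hA)
  calc _ ≤ (Finset.univ.filter (fun i => l i x = 0)).card := by
        apply Finset.card_le_card
        intro i hi
        simp only [Finset.mem_filter, Finset.mem_univ, true_and] at hi ⊢
        exact hi x.2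
    _ = _ := h x
    _ ≤ _ := by
        apply Finset.card_le_card
        intro i hi
        simp only [Finset.mem_filter, Finset.mem_univ, true_and] at hi ⊢
        by_contra hc
        exact hx i (by simpa using hc) (by simpa using hi)

open Classical in
lemma count3 {𝔽 V ι : Type*} [Field 𝔽] [Fintype 𝔽] [AddCommGroup V] [Module 𝔽 V] [Finite V]
    [Fintype ι] (A : ι → Type*) [∀ i, AddCommGroup (A i)] [∀ i, Module 𝔽 (A i)]
    (hA : (∀ i, Nonempty (A i ≃ₗ[𝔽] 𝔽)) ∨ Fintype.card ι ≤ Fintype.card 𝔽)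
    (l m : ∀ i, V →ₗ[𝔽] A i) (U : Submodule 𝔽 V)
    (h : ∀ x, (Finset.univ.filter (fun i => l i x = 0)).card =
      (Finset.univ.filter (fun i => m i x = 0)).card) :
    (Finset.univ.filter (fun i => U ≤ LinearMap.ker (l i))).card =
    (Finset.univ.filter (fun i => U ≤ LinearMap.ker (m i))).card := by
  rcases hA with hA | hA
  · have h1 := count1 A hA l U
    have h2 := count1 A hA m U
    have hfin : Fintype V := Fintype.ofFinite V
    have hq : 1 < Fintype.card 𝔽 := Fintype.one_lt_card
    have key : ∀ l : ∀ i, V →ₗ[𝔽] A i, Nat.card {p : ι × U // l p.1 p.2 = 0} =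
        ∑ x : U, (Finset.univ.filter (fun i => l i x = 0)).card := by
      intro l
      let E : {p : ι × U // l p.1 p.2 = 0} ≃ Σ x : U, {i // l i x = 0} :=
        { toFun := fun p => ⟨p.1.2, p.1.1, p.2⟩
          invFun := fun p => ⟨(p.2.1, p.1), p.2.2⟩
          left_inv := fun _ => rfl
          right_inv := fun _ => rfl }
      rw [Nat.card_congr E, Nat.card_sigma]
      refine Finset.sum_congr rfl fun x _ => ?_
      rw [Nat.card_eq_fintype_card, Fintype.card_subtype]
    rw [key, Finset.sum_congr rfl (fun (x : U) _ => h (x : V)), ← key, h2] at h1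
    have h3 := Nat.eq_of_mul_eq_mul_left (Nat.card_pos) h1
    have h4 := Nat.add_right_cancel h3
    exact (Nat.eq_of_mul_eq_mul_left (by omega) h4).symm
  · exact le_antisymm (count2 A hA l m U h) (count2 A hA m l U fun x => (h x).symm)

open Classical in
lemma count4 {X ι : Type*} [PartialOrder X] [Finite X] [Fintype ι] (K L : ι → X)
    (h : ∀ U, (Finset.univ.filter (fun i => U ≤ K i)).card =
      (Finset.univ.filter (fun i => U ≤ L i)).card) (U : X) :
    (Finset.univ.filter (fun i => K i = U)).card = (Finset.univ.filter (fun i => L i = U)).card := by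
  have := Fintype.ofFinite X
  induction U using WellFoundedGT.induction with
  | ind U ih =>
    have key : ∀ K : ι → X, (Finset.univ.filter (fun i => U ≤ K i)).card =
        (Finset.univ.filter (fun i => K i = U)).card +
          ∑ W ∈ Finset.univ.filter (fun W => U < W), (Finset.univ.filter (fun i => K i = W)).card := by
      intro K
      rw [← Finset.card_biUnion, ← Finset.card_union_of_disjoint]
      · congr 1; ext i
        simp [le_iff_eq_or_lt, eq_comm]
      · rw [Finset.disjoint_left]
        intro i hi hi'
        simp at hi hi'
        rw [hi] at hi'
        exact lt_irrefl _ hi'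
      · intro a _ b _ hab
        rw [Function.onFun, Finset.disjoint_left]
        intro i hi hi'
        simp at hi hi'
        exact hab (hi.symm.trans hi')
    have h1 := h U
    rw [key K, key L, Finset.sum_congr rfl (fun W hW => ih W (Finset.mem_filter.1 hW).2)] at h1
    exact Nat.add_right_cancel h1

open Classical in
lemma level_perm {𝔽 V ι : Type*} [Field 𝔽] [Fintype 𝔽] [AddCommGroup V] [Module 𝔽 V] [Finite V]
    [Fintype ι] (A : ι → Type*) [∀ i, AddCommGroup (A i)] [∀ i, Module 𝔽 (A i)]
    (hA : (∀ i, Nonempty (A i ≃ₗ[𝔽] 𝔽)) ∨ Fintype.card ι ≤ Fintype.card 𝔽)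
    (l m : ∀ i, V →ₗ[𝔽] A i)
    (h : ∀ x, (Finset.univ.filter (fun i => l i x = 0)).card =
      (Finset.univ.filter (fun i => m i x = 0)).card) :
    ∃ σ : Equiv.Perm ι, ∀ i, LinearMap.ker (l i) = LinearMap.ker (m (σ i)) := by
  have h1 := count4 (fun i => LinearMap.ker (l i)) (fun i => LinearMap.ker (m i))
    (fun U => count3 A hA l m U h)
  have h2 : ∀ U, Nonempty ({i // LinearMap.ker (l i) = U} ≃ {i // LinearMap.ker (m i) = U}) := by
    intro U
    rw [← Fintype.card_eq, Fintype.card_subtype, Fintype.card_subtype]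
    exact h1 U
  exact ⟨Equiv.ofFiberEquiv (fun U => (h2 U).some), fun i =>
    (Equiv.ofFiberEquiv_map (f := fun i => LinearMap.ker (l i)) (g := fun i => LinearMap.ker (m i))
      (fun U => (h2 U).some) i).symm⟩

end MEPaux

namespace MEPaux
open Module
set_option linter.unusedSectionVars false

section poset
variable {Ω : Type*} [Fintype Ω] [PartialOrder Ω]

lemma le_lenP (y : Ω) (c : Finset Ω) (h1 : IsChain (· ≤ ·) (c : Set Ω)) (h2 : y ∈ c)
    (h3 : ∀ x ∈ c, x ≤ y) : c.card ≤ lenP y := by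
  apply le_csSup
  · exact ⟨Fintype.card Ω, by rintro n ⟨c, -, -, -, rfl⟩; exact Finset.card_le_univ c⟩
  · exact ⟨c, h1, h2, h3, rfl⟩

lemma lenP_spec (y : Ω) : ∃ c : Finset Ω, IsChain (· ≤ ·) (c : Set Ω) ∧ y ∈ c ∧
    (∀ x ∈ c, x ≤ y) ∧ c.card = lenP y := by
  have : lenP y ∈ {n : ℕ | ∃ c : Finset Ω, IsChain (· ≤ ·) (c : Set Ω) ∧ y ∈ c ∧
    (∀ x ∈ c, x ≤ y) ∧ c.card = n} := by
    apply Nat.sSup_mem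
    · exact ⟨1, {y}, by simp, by simp, by simp, by simp⟩
    · exact ⟨Fintype.card Ω, by rintro n ⟨c, -, -, -, rfl⟩; exact Finset.card_le_univ c⟩
  exact this

lemma one_le_lenP (y : Ω) : 1 ≤ lenP y := by
  simpa using le_lenP y {y} (by simp) (by simp) (by simp)

lemma lenP_le_max (y : Ω) : lenP y ≤ maxChainCard Ω := by
  obtain ⟨c, h1, -, -, h4⟩ := lenP_spec y
  rw [← h4]
  apply le_csSup
  · exact ⟨Fintype.card Ω, by rintro n ⟨c, -, rfl⟩; exact Finset.card_le_univ c⟩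
  · exact ⟨c, h1, rfl⟩

lemma lenP_lt {u v : Ω} (h : u < v) : lenP u < lenP v := by
  classical
  obtain ⟨c, h1, h2, h3, h4⟩ := lenP_spec u
  have hv : v ∉ c := fun hv => absurd (h3 v hv) (not_le_of_gt h)
  have := le_lenP v (insert v c) (by
    rw [Finset.coe_insert]
    exact h1.insert fun b hb _ => Or.inr ((h3 b hb).trans h.le)) (by simp) (by
    intro x hx
    rcases Finset.mem_insert.1 hx with rfl | hx
    · exact le_rfl
    · exact (h3 x hx).trans h.le)
  rw [Finset.card_insert_of_notMem hv, h4] at this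
  omega

lemma lenP_le {u v : Ω} (h : u ≤ v) : lenP u ≤ lenP v := by
  rcases h.eq_or_lt with rfl | h
  · exact le_rfl
  · exact (lenP_lt h).le

lemma exists_pred {v : Ω} (h : 2 ≤ lenP v) : ∃ u < v, lenP u + 1 = lenP v := by
  classical
  obtain ⟨c, h1, h2, h3, h4⟩ := lenP_spec v
  have hc : (c.erase v).card = lenP v - 1 := by rw [Finset.card_erase_of_mem h2, h4]
  have hne : (c.erase v).Nonempty := by rw [← Finset.card_pos]; omega
  obtain ⟨u, hu, hmax⟩ := (c.erase v).exists_maximal hne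
  rw [Finset.mem_erase] at hu
  have huv : u < v := lt_of_le_of_ne (h3 u hu.2) hu.1
  refine ⟨u, huv, ?_⟩
  have h5 := le_lenP u (c.erase v) (h1.mono (by simp)) (Finset.mem_erase.2 hu) (by
    intro x hx
    rcases h1.total (Finset.mem_of_mem_erase hx) hu.2 with h | h
    · exact h
    · exact hmax hx h)
  have := lenP_lt huv
  omega

lemma exists_below {r : ℕ} (hr : 1 ≤ r) (v : Ω) (h : r ≤ lenP v) : ∃ u ≤ v, lenP u = r := by
  induction v using WellFoundedLT.induction with
  | ind v ih =>
    rcases h.eq_or_lt with h | h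
    · exact ⟨v, le_rfl, h.symm⟩
    · obtain ⟨w, hw, hw'⟩ := exists_pred (v := v) (by omega)
      obtain ⟨u, hu, hu'⟩ := ih w hw (by omega)
      exact ⟨u, hu.trans hw.le, hu'⟩

lemma idl_mono {A B : Set Ω} (h : A ⊆ B) : idl A ⊆ idl B := by
  rintro a ⟨b, hb, hab⟩
  exact ⟨b, h hb, hab⟩

lemma subset_idl (A : Set Ω) : A ⊆ idl A := fun a ha => ⟨a, ha, le_rfl⟩

variable {H : Ω → Type*} [∀ i, Zero (H i)]

lemma wtP_eq_zero {x : ∀ i, H i} (h : wtP x = 0) : x = 0 := by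
  unfold wtP at h
  rw [Set.ncard_eq_zero] at h
  funext i
  by_contra hi
  have : i ∈ idl (hsupp x) := subset_idl _ hi
  rw [h] at this
  exact this

/-- agreement at the top level gives equal weights -/
lemma wtP_congr_top (hP : Hierarchical Ω) {x y : ∀ i, H i} (r : ℕ)
    (hx : ∀ i, x i ≠ 0 → lenP i ≤ r) (hy : ∀ i, y i ≠ 0 → lenP i ≤ r)
    (hne : ∃ i, lenP i = r ∧ x i ≠ 0) (h : ∀ i, lenP i = r → x i = y i) : wtP x = wtP y := by
  have key : ∀ x y : ∀ i, H i, (∀ i, x i ≠ 0 → lenP i ≤ r) →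
      (∃ i, lenP i = r ∧ y i ≠ 0) → (∀ i, lenP i = r → x i = y i) →
      idl (hsupp x) ⊆ idl (hsupp y) := by
    rintro x y hx ⟨c, hc, hyc⟩ h a ⟨b, hb, hab⟩
    rcases (hx b hb).eq_or_lt with hbr | hbr
    · exact ⟨b, by change y b ≠ 0; rw [← h b hbr]; exact hb, hab⟩
    · exact ⟨c, hyc, hab.trans (hP b c (by omega))⟩
  unfold wtP
  congr 1
  apply (key x y hx _ h).antisymm (key y x hy hne fun i hi => (h i hi).symm)
  obtain ⟨i, hi, hi'⟩ := hne
  exact ⟨i, hi, by rw [← h i hi]; exact hi'⟩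

/-- weight formula -/
lemma wtP_formula (hP : Hierarchical Ω) {x : ∀ i, H i} (r : ℕ)
    (hx : ∀ i, x i ≠ 0 → lenP i ≤ r) (hne : ∃ i, lenP i = r ∧ x i ≠ 0) :
    wtP x = Set.ncard {i : Ω | lenP i < r} + Set.ncard {i : Ω | lenP i = r ∧ x i ≠ 0} := by
  unfold wtP
  rw [← Set.ncard_union_eq]
  · congr 1
    ext a
    constructor
    · rintro ⟨b, hb, hab⟩
      by_cases har : lenP a < r
      · exact Or.inl har
      · right
        have h1 := lenP_le hab
        have h2 := hx b hb
        rcases hab.eq_or_lt with rfl | hlt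
        · exact ⟨by omega, hb⟩
        · have := lenP_lt hlt; omega
    · rintro (ha | ha)
      · obtain ⟨c, hc, hc'⟩ := hne
        exact ⟨c, hc', hP a c (by simp at ha; omega)⟩
      · exact ⟨a, ha.2, le_rfl⟩
  · rw [Set.disjoint_left]
    rintro a ha ⟨ha', -⟩
    simp at ha
    omega

lemma wtP_le_of (x : ∀ i, H i) (r : ℕ) (hx : ∀ i, x i ≠ 0 → lenP i ≤ r) :
    wtP x ≤ Set.ncard {i : Ω | lenP i ≤ r} := by
  refine Set.ncard_le_ncard ?_ (Set.toFinite _)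
  rintro a ⟨b, hb, hab⟩
  exact (lenP_le hab).trans (hx b hb)

lemma lt_wtP_of (hP : Hierarchical Ω) (x : ∀ i, H i) (r : ℕ) (hx : ∃ i, x i ≠ 0 ∧ r < lenP i) :
    Set.ncard {i : Ω | lenP i ≤ r} < wtP x := by
  refine Set.ncard_lt_ncard ?_ (Set.toFinite _)
  obtain ⟨b, hb, hbr⟩ := hx
  refine ⟨fun a ha => ⟨b, hb, hP a b ?_⟩, fun h => ?_⟩
  · simp at ha; omega
  · have := h (subset_idl _ hb)
    simp at this; omega

lemma level_of_wt (hP : Hierarchical Ω) {x y : ∀ i, H i} (h : wtP x = wtP y) (r : ℕ)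
    (hx : ∀ i, x i ≠ 0 → lenP i ≤ r) : ∀ i, y i ≠ 0 → lenP i ≤ r := by
  intro i hi
  by_contra hc
  have h1 := lt_wtP_of hP y r ⟨i, hi, by omega⟩
  have h2 := wtP_le_of x r hx
  omega

lemma count_of_wt (hP : Hierarchical Ω) {x y : ∀ i, H i} (h : wtP x = wtP y) (r : ℕ)
    (hx : ∀ i, x i ≠ 0 → lenP i ≤ r) :
    Set.ncard {i : Ω | lenP i = r ∧ x i ≠ 0} = Set.ncard {i : Ω | lenP i = r ∧ y i ≠ 0} := by
  have hy := level_of_wt hP h r hx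
  have aux : ∀ x y : ∀ i, H i, wtP x = wtP y → (∀ i, x i ≠ 0 → lenP i ≤ r) →
      (¬ ∃ i, lenP i = r ∧ x i ≠ 0) → ¬ ∃ i, lenP i = r ∧ y i ≠ 0 := by
    rintro x y h hx hn ⟨i, hi, hi'⟩
    have h1 : ∀ i, x i ≠ 0 → lenP i ≤ r - 1 := fun j hj => by
      have := hx j hj
      by_contra hc
      exact hn ⟨j, by omega, hj⟩
    have := level_of_wt hP h (r-1) h1 i hi'
    have := one_le_lenP i
    omega
  by_cases hne : ∃ i, lenP i = r ∧ x i ≠ 0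
  · have hne' : ∃ i, lenP i = r ∧ y i ≠ 0 := by
      by_contra hc
      exact aux y x h.symm hy hc hne
    rw [wtP_formula hP r hx hne, wtP_formula hP r hy hne'] at h
    omega
  · have hne' := aux x y h hx hne
    push Not at hne hne'
    have e1 : {i : Ω | lenP i = r ∧ x i ≠ 0} = ∅ := by
      ext i; simp; exact hne i
    have e2 : {i : Ω | lenP i = r ∧ y i ≠ 0} = ∅ := by
      ext i; simp; exact hne' i
    rw [e1, e2]

/-- len-preserving permutations preserve weight -/
lemma wtP_perm (hP : Hierarchical Ω) (σ : Equiv.Perm Ω) (hσ : ∀ i, lenP (σ i) = lenP i)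
    (x y : ∀ i, H i) (h : ∀ i, x i ≠ 0 ↔ y (σ i) ≠ 0) : wtP x = wtP y := by
  have hmono : ∀ (τ : Equiv.Perm Ω), (∀ i, lenP (τ i) = lenP i) → ∀ u v : Ω, u ≤ v → τ u ≤ τ v := by
    intro τ hτ u v huv
    rcases huv.eq_or_lt with rfl | hlt
    · exact le_rfl
    · apply hP; rw [hτ, hτ]; exact lenP_lt hlt
  have hσ' : ∀ i, lenP (σ.symm i) = lenP i := fun i => by rw [← hσ (σ.symm i)]; simp
  unfold wtP
  rw [← Set.ncard_image_of_injective _ σ.injective]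
  congr 1
  ext a
  constructor
  · rintro ⟨a, ⟨b, hb, hab⟩, rfl⟩
    exact ⟨σ b, (h b).1 hb, hmono σ hσ _ _ hab⟩
  · rintro ⟨b, hb, hab⟩
    refine ⟨σ.symm a, ⟨σ.symm b, ?_, hmono σ.symm hσ' _ _ hab⟩, by simp⟩
    change x _ ≠ 0
    rw [h]
    have : ∀ c, c = b → y c ≠ 0 := by rintro _ rfl; exact hb
    exact this _ (by simp)

end poset
end MEPaux

namespace MEPaux
open Module
set_option linter.unusedSectionVars false

section suff
variable {Ω : Type*} [Fintype Ω] [PartialOrder Ω] {𝔽 : Type*} [Field 𝔽] [Fintype 𝔽]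
  {H : Ω → Type*} [∀ i, AddCommGroup (H i)] [∀ i, Module 𝔽 (H i)]

def Fil (𝔽 : Type*) [Field 𝔽] (H : Ω → Type*) [∀ i, AddCommGroup (H i)] [∀ i, Module 𝔽 (H i)]
    (r : ℕ) : Submodule 𝔽 (∀ i, H i) where
  carrier := {x | ∀ i, x i ≠ 0 → lenP i < r}
  zero_mem' := fun i hi => absurd rfl hi
  add_mem' := by
    intro x y hx hy i hi
    by_cases h : x i = 0
    · apply hy i
      intro h'
      apply hi
      simp [h, h']
    · exact hx i h
  smul_mem' := by
    intro c x hx i hi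
    apply hx i
    intro h
    apply hi
    simp [h]

lemma mem_Fil {r : ℕ} {x : ∀ i, H i} : x ∈ Fil 𝔽 H r ↔ ∀ i, x i ≠ 0 → lenP i < r := Iff.rfl

lemma mem_Fil_succ {r : ℕ} {x : ∀ i, H i} : x ∈ Fil 𝔽 H (r+1) ↔ ∀ i, x i ≠ 0 → lenP i ≤ r := by
  simp [mem_Fil]

lemma Fil_mono : Monotone (Fil 𝔽 H) := fun _ _ h _ hx i hi => (hx i hi).trans_le h

lemma Fil_zero : Fil 𝔽 H 0 = ⊥ := by
  rw [eq_bot_iff]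
  intro x hx
  rw [Submodule.mem_bot]
  funext i
  by_contra h
  exact absurd (hx i h) (by omega)

theorem suff [∀ i, Finite (H i)] (hP : Hierarchical Ω)
    (hiso : ∀ u v : Ω, lenP u = lenP v → Nonempty (H u ≃ₗ[𝔽] H v))
    (hr : ∀ r, (∀ i : Ω, lenP i = r → Nonempty (H i ≃ₗ[𝔽] 𝔽)) ∨
      Set.ncard (Wset (Ω := Ω) r) ≤ Fintype.card 𝔽) : MEPP 𝔽 H := by
  classical
  intro C f hf
  have hfinH : Finite (∀ i, H i) := inferInstance
  -- f extended to the whole space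
  obtain ⟨f', hf'⟩ : ∃ f' : (∀ i, H i) →ₗ[𝔽] (∀ i, H i), f' ∘ₗ C.subtype = f :=
    LinearMap.exists_extend f
  have hf'x : ∀ x (hx : x ∈ C), f' x = f ⟨x, hx⟩ := fun x hx => by rw [← hf']; rfl
  have hw : ∀ x ∈ C, wtP (f' x) = wtP x := fun x hx => by rw [hf'x x hx]; exact hf ⟨x, hx⟩
  -- level permutations
  have hlev : ∀ r, ∃ σ : Equiv.Perm {i : Ω // lenP i = r}, ∀ i,
      LinearMap.ker ((LinearMap.proj i.1 : (∀ i, H i) →ₗ[𝔽] H i.1) ∘ₗ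
        (C ⊓ Fil 𝔽 H (r+1)).subtype) =
      LinearMap.ker ((LinearMap.proj (σ i).1 : (∀ i, H i) →ₗ[𝔽] H (σ i).1) ∘ₗ f' ∘ₗ
        (C ⊓ Fil 𝔽 H (r+1)).subtype) := by
    intro r
    refine level_perm (𝔽 := 𝔽) (ι := {i : Ω // lenP i = r}) (fun i => H i.1) ?_
      (fun i => (LinearMap.proj i.1 : (∀ i, H i) →ₗ[𝔽] H i.1) ∘ₗ (C ⊓ Fil 𝔽 H (r+1)).subtype)
      (fun i => (LinearMap.proj i.1 : (∀ i, H i) →ₗ[𝔽] H i.1) ∘ₗ f' ∘ₗ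
        (C ⊓ Fil 𝔽 H (r+1)).subtype) ?_
    · rcases hr r with h | h
      · left; intro i; exact h i.1 i.2
      · right
        rw [← Nat.card_eq_fintype_card]
        exact h
    · rintro ⟨x, hxC, hxF⟩
      have h1 := count_of_wt hP (hw x hxC).symm r (mem_Fil_succ.1 hxF)
      have key : ∀ y : ∀ i, H i, (Finset.univ.filter (fun i : {i : Ω // lenP i = r} => y i.1 = 0)).card
          + Set.ncard {i : Ω | lenP i = r ∧ y i ≠ 0} = Fintype.card {i : Ω // lenP i = r} := by
        intro y
        rw [← Finset.card_univ, ← Finset.card_filter_add_card_filter_not (s := Finset.univ)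
          (fun i : {i : Ω // lenP i = r} => y i.1 = 0)]
        congr 1
        rw [← Set.ncard_coe_finset, ← Set.ncard_image_of_injective _ Subtype.val_injective]
        congr 1
        ext i
        simp
        exact exists_prop.symm
      have h2 := key x
      have h3 := key (f' x)
      have h4 : (Finset.univ.filter (fun i : {i : Ω // lenP i = r} => x i.1 = 0)).card =
        (Finset.univ.filter (fun i : {i : Ω // lenP i = r} => (f' x) i.1 = 0)).card := by omega
      convert h4 using 2 <;> (ext i; rw [Finset.mem_filter, Finset.mem_filter]; rfl)
  choose σ' hσ' using hlev
  let σ : Equiv.Perm Ω := Equiv.ofFiberEquiv (f := lenP) (g := lenP) σ'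
  have hσl : ∀ i, lenP (σ i) = lenP i := fun i => Equiv.ofFiberEquiv_map σ' i
  have hg : ∀ i, ∃ g : H i ≃ₗ[𝔽] H (σ i), ∀ x ∈ C, x ∈ Fil 𝔽 H (lenP i + 1) →
      g (x i) = f' x (σ i) := by
    intro i
    have h := hσ' (lenP i) ⟨i, rfl⟩
    obtain ⟨g, hg⟩ := ext_iso (hiso i (σ i) (hσl i).symm).some _ _ h
    exact ⟨g, fun x hx hx' => hg ⟨x, hx, hx'⟩⟩
  choose g hg using hg
  let G : (∀ i, H i) →ₗ[𝔽] (∀ i, H i) :=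
    ((LinearEquiv.piCongrLeft 𝔽 H σ).toLinearMap) ∘ₗ
      (LinearEquiv.piCongrRight g).toLinearMap
  have hG : ∀ x i, G x (σ i) = g i (x i) := by
    intro x i
    simp only [G, LinearMap.comp_apply]
    exact Equiv.piCongrLeft_apply_apply H σ _ i
  have hGw : ∀ x, wtP (G x) = wtP x := by
    intro x
    refine (wtP_perm hP σ hσl x (G x) fun i => ?_).symm
    rw [hG]; simp
  have hGl : ∀ r x, x ∈ Fil 𝔽 H (r+1) → G x ∈ Fil 𝔽 H (r+1) := by
    intro r x hx
    rw [mem_Fil_succ] at hx ⊢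
    exact level_of_wt hP (hGw x).symm r hx
  have hfl : ∀ r x, x ∈ C → x ∈ Fil 𝔽 H (r+1) → f' x ∈ Fil 𝔽 H (r+1) := by
    intro r x hxC hx
    rw [mem_Fil_succ] at hx ⊢
    exact level_of_wt hP (hw x hxC).symm r hx
  have hlow : ∀ r x, x ∈ C → x ∈ Fil 𝔽 H (r+1) → ∀ i, lenP i = r → (f' x - G x) i = 0 := by
    intro r x hxC hx i hi
    have h1 := hG x (σ.symm i)
    have h2 := hg (σ.symm i) x hxC (by
      rw [← hσl]; simpa [hi] using hx)
    have : ∀ j, σ j = i → g j (x j) = f' x (σ j) → G x (σ j) = g j (x j) → (f' x - G x) i = 0 := by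
      rintro j rfl h h'
      simp [h, h']
    exact this _ (by simp) h2 h1
  obtain ⟨p, hp1, hp2, hp3⟩ := filt_proj (Fil 𝔽 H) Fil_mono C Fil_zero (maxChainCard Ω + 1)
  have htop : ∀ x, x ∈ Fil 𝔽 H (maxChainCard Ω + 1) := fun x =>
    mem_Fil_succ.2 fun i _ => lenP_le_max i
  let φ : (∀ i, H i) →ₗ[𝔽] (∀ i, H i) := G + (f' - G) ∘ₗ p
  have hφx : ∀ x, φ x = G x + (f' (p x) - G (p x)) := fun x => rfl
  have hφw : ∀ x, wtP (φ x) = wtP x := by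
    intro x
    by_cases hx0 : x = 0
    · rw [hx0, map_zero]
    obtain ⟨j, hj⟩ : ∃ j, x j ≠ 0 := by
      by_contra hc; push Not at hc; exact hx0 (funext hc)
    obtain ⟨t, ht, htmax⟩ := (Finset.univ.filter (fun i => x i ≠ 0)).exists_max_image lenP
      ⟨j, by simpa using hj⟩
    simp only [Finset.mem_filter, Finset.mem_univ, true_and] at ht htmax
    have hxF : x ∈ Fil 𝔽 H (lenP t + 1) := mem_Fil_succ.2 htmax
    have hpF := hp3 _ x hxF
    have hpC := (hp1 x).1
    rw [← hGw x]
    have hφF : φ x ∈ Fil 𝔽 H (lenP t + 1) := by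
      rw [hφx]
      exact add_mem (hGl _ _ hxF) (sub_mem (hfl _ _ hpC hpF) (hGl _ _ hpF))
    refine (wtP_congr_top hP (lenP t) (mem_Fil_succ.1 (hGl _ _ hxF)) (mem_Fil_succ.1 hφF)
      ⟨σ t, hσl t, ?_⟩ ?_).symm
    · rw [hG]; simpa using ht
    · intro i hi
      have := hlow _ _ hpC hpF i hi
      rw [hφx]
      simp only [Pi.add_apply]
      rw [this, add_zero]
  have hinj : Function.Injective φ := by
    rw [← LinearMap.ker_eq_bot, LinearMap.ker_eq_bot']
    intro x hx
    apply wtP_eq_zero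
    rw [← hφw x, hx]
    have := hGw 0
    unfold wtP
    rw [Set.ncard_eq_zero]
    ext a
    simp [idl, hsupp]
  have hfd : FiniteDimensional 𝔽 (∀ i, H i) := inferInstance
  refine ⟨LinearEquiv.ofInjectiveEndo φ hinj, fun α => ?_, fun x => ?_⟩
  · exact hφw α
  · change φ x = f x
    rw [hφx, hp2 x ⟨x.2, htop _⟩, hf'x x x.2]
    simp
end suff
end MEPaux

namespace MEPaux
open Module
set_option linter.unusedSectionVars false

section nec
variable {Ω : Type*} [Fintype Ω] [PartialOrder Ω] {𝔽 : Type*} [Field 𝔽] [Fintype 𝔽]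
  {H : Ω → Type*} [∀ i, AddCommGroup (H i)] [∀ i, Module 𝔽 (H i)]

lemma wtP_zero : wtP (0 : ∀ i, H i) = 0 := by
  unfold wtP
  rw [Set.ncard_eq_zero]
  ext a
  simp [idl, hsupp]

lemma mep_ext (h : MEPP 𝔽 H) {V : Type*} [AddCommGroup V] [Module 𝔽 V]
    (μ l : V →ₗ[𝔽] (∀ i, H i)) (hμ : Function.Injective μ) (hw : ∀ x, wtP (l x) = wtP (μ x)) :
    ∃ φ : (∀ i, H i) ≃ₗ[𝔽] (∀ i, H i), (∀ α, wtP (φ α) = wtP α) ∧ ∀ x, φ (μ x) = l x := by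
  let e := LinearEquiv.ofInjective μ hμ
  obtain ⟨φ, h1, h2⟩ := h (LinearMap.range μ) (l ∘ₗ e.symm.toLinearMap) (by
    intro x
    obtain ⟨y, rfl⟩ := e.surjective x
    simp only [LinearMap.comp_apply, LinearEquiv.coe_coe, LinearEquiv.symm_apply_apply]
    exact hw y)
  refine ⟨φ, h1, fun x => ?_⟩
  have := h2 (e x)
  simpa [e] using this

lemma wtP_smul {c : 𝔽} (hc : c ≠ 0) (x : ∀ i, H i) : wtP (c • x) = wtP x := by
  unfold wtP
  congr 2
  ext i
  simp [hsupp, hc]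

lemma mep_line (h : MEPP 𝔽 H) {y z : ∀ i, H i} (hy : y ≠ 0) (hw : wtP z = wtP y) :
    ∃ φ : (∀ i, H i) ≃ₗ[𝔽] (∀ i, H i), (∀ α, wtP (φ α) = wtP α) ∧ φ y = z := by
  obtain ⟨φ, h1, h2⟩ := mep_ext h (LinearMap.toSpanSingleton 𝔽 _ y) (LinearMap.toSpanSingleton 𝔽 _ z)
    (smul_left_injective 𝔽 hy) (by
      intro c
      by_cases hc : c = 0
      · simp [hc]
      · simp only [LinearMap.toSpanSingleton_apply]
        rw [wtP_smul hc, wtP_smul hc, hw])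
  exact ⟨φ, h1, by simpa using h2 1⟩

open Classical in
lemma idl_single (v : Ω) (a : H v) (ha : a ≠ 0) :
    idl (hsupp (Pi.single v a : ∀ i, H i)) = {i | i ≤ v} := by
  have : hsupp (Pi.single v a : ∀ i, H i) = {v} := by
    ext i
    by_cases hi : i = v
    · subst hi; simp [hsupp, ha]
    · simp [hsupp, hi]
  rw [this]
  ext i
  simp [idl]

open Classical in
lemma wtP_single (v : Ω) (a : H v) (ha : a ≠ 0) :
    wtP (Pi.single v a : ∀ i, H i) = Set.ncard {i | i ≤ v} := by
  unfold wtP; rw [idl_single v a ha]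

theorem nec_hier [∀ i, Nontrivial (H i)] (h : MEPP 𝔽 H) : Hierarchical Ω := by
  classical
  suffices hmain : ∀ r, ∀ u v : Ω, lenP u = r → r < lenP v → u ≤ v by
    intro u v huv
    exact hmain _ u v rfl huv
  intro r
  induction r using Nat.strong_induction_on with
  | _ r IH =>
  intro u v0 hu hv0
  by_contra hnle
  -- choose v minimal
  obtain ⟨v, ⟨hv, huv⟩, hmin⟩ : ∃ v : Ω, (r < lenP v ∧ ¬ u ≤ v) ∧
      ∀ w, w < v → ¬ (r < lenP w ∧ ¬ u ≤ w) := by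
    obtain ⟨v, hv, hm⟩ := (wellFounded_lt (α := Ω)).has_min {w | r < lenP w ∧ ¬ u ≤ w} ⟨v0, hv0, hnle⟩
    exact ⟨v, hv, fun w hw hw' => hm w hw' hw⟩
  have hr : 1 ≤ r := hu ▸ one_le_lenP u
  choose e he using fun i => exists_ne (0 : H i)
  let S : Set Ω := {i | lenP i < r} ∪ {i | lenP i = r ∧ i ≤ v}
  let y : ∀ i, H i := fun i => if i = u ∨ (lenP i = r ∧ i ≤ v) then e i else 0
  let z : ∀ i, H i := Pi.single v (e v)
  have hyi : ∀ i, y i ≠ 0 ↔ (i = u ∨ (lenP i = r ∧ i ≤ v)) := by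
    intro i
    by_cases hc : i = u ∨ (lenP i = r ∧ i ≤ v)
    · simp [y, hc, he]
    · simp [y, hc]
  have huS : u ∉ S := by
    rintro (hh | hh)
    · simp [hu] at hh
    · exact huv hh.2
  have hvS : v ∉ S := by
    rintro (hh | hh)
    · simp at hh; omega
    · have := hh.1; omega
  have hy : idl (hsupp y) = insert u S := by
    ext a
    constructor
    · rintro ⟨b, hb, hab⟩
      have hb' := (hyi b).1 hb
      have hlb : lenP b = r := by
        rcases hb' with rfl | hb'
        · exact hu
        · exact hb'.1
      rcases hab.eq_or_lt with rfl | hlt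
      · rcases hb' with rfl | hb'
        · exact Set.mem_insert _ _
        · exact Or.inr (Or.inr hb')
      · exact Or.inr (Or.inl (by have := lenP_lt hlt; simp; omega))
    · rintro (rfl | ha | ha)
      · exact subset_idl _ ((hyi _).2 (Or.inl rfl))
      · exact ⟨u, (hyi _).2 (Or.inl rfl), IH (lenP a) ha a u rfl (by simp at ha; omega)⟩
      · exact subset_idl _ ((hyi _).2 (Or.inr ha))
  have hz : idl (hsupp z) = insert v S := by
    rw [idl_single v _ (he v)]
    ext a
    constructor
    · intro hav
      rcases (show a ≤ v from hav).eq_or_lt with rfl | hlt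
      · exact Set.mem_insert _ _
      · right
        by_cases har : r < lenP a
        · exfalso
          apply hmin a hlt
          exact ⟨har, fun hua => huv (hua.trans hlt.le)⟩
        · rcases lt_or_eq_of_le (not_lt.1 har) with h' | h'
          · exact Or.inl h'
          · exact Or.inr ⟨h', hlt.le⟩
    · rintro (rfl | ha | ha)
      · exact le_refl a
      · exact IH (lenP a) ha a v rfl (by simp at ha; omega)
      · exact ha.2
  have hwt : wtP z = wtP y := by
    unfold wtP
    rw [hy, hz, Set.ncard_insert_of_notMem huS, Set.ncard_insert_of_notMem hvS]
  have hy0 : y ≠ 0 := fun h0 => (hyi u).2 (Or.inl rfl) (by rw [h0]; rfl)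
  obtain ⟨φ, hφ, hφy⟩ := mep_line h hy0 hwt
  have hsmall : ∀ x : ∀ i, H i, wtP x ≤ Set.ncard {i : Ω | lenP i < r} + 1 → x ∈ Fil 𝔽 H (r+1) := by
    intro x hx
    rw [mem_Fil_succ]
    intro b hb
    by_contra hc
    obtain ⟨w, hwb, hw⟩ := exists_below hr b (by omega)
    have h1 : insert b (insert w {i : Ω | lenP i < r}) ⊆ idl (hsupp x) := by
      rintro a (rfl | rfl | ha)
      · exact ⟨a, hb, le_rfl⟩
      · exact ⟨b, hb, hwb⟩
      · exact ⟨b, hb, IH (lenP a) ha a b rfl (by simp at ha; omega)⟩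
    have h2 := Set.ncard_le_ncard h1 (Set.toFinite _)
    rw [Set.ncard_insert_of_notMem, Set.ncard_insert_of_notMem] at h2
    · unfold wtP at hx; omega
    · simp [hw]
    · rintro (rfl | hh)
      · omega
      · simp at hh; omega
  have hinv : ∀ x ∈ Fil 𝔽 H (r+1), φ x ∈ Fil 𝔽 H (r+1) := by
    intro x hx
    rw [← Finset.univ_sum_single x, map_sum]
    apply Submodule.sum_mem
    intro i _
    apply hsmall
    rw [hφ]
    by_cases hxi : x i = 0
    · rw [hxi, Pi.single_zero, wtP_zero]; omega
    · rw [wtP_single i _ hxi]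
      refine (Set.ncard_le_ncard (t := insert i {i : Ω | lenP i < r}) ?_ (Set.toFinite _)).trans
        (Set.ncard_insert_le _ _)
      intro a ha
      rcases (show a ≤ i from ha).eq_or_lt with rfl | hlt
      · exact Set.mem_insert _ _
      · right
        have := lenP_lt hlt
        have := mem_Fil_succ.1 hx i hxi
        simp; omega
  have hyF : y ∈ Fil 𝔽 H (r+1) := by
    rw [mem_Fil_succ]
    intro i hi
    rcases (hyi i).1 hi with rfl | hi
    · exact hu.le
    · exact hi.1.le
  have := mem_Fil_succ.1 (hinv y hyF) v (by rw [hφy]; simp [z, he])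
  omega

theorem nec_dim (h : MEPP 𝔽 H) (u v : Ω)
    (huv : Set.ncard {i | i ≤ u} = Set.ncard {i | i ≤ v}) [Nontrivial (H u)]
    (j : H u →ₗ[𝔽] H v) (hj : Function.Injective j) : Function.Surjective j := by
  classical
  intro v'
  by_contra hv'
  have hv'n : ∀ x, v' + j x ≠ 0 := by
    intro x hx
    apply hv'
    exact ⟨-x, by rw [map_neg]; exact (eq_neg_of_add_eq_zero_left hx).symm⟩
  obtain ⟨φ, hφ, hφ2⟩ := mep_ext h ((LinearMap.single 𝔽 H v) ∘ₗ j) (LinearMap.single 𝔽 H u) (by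
    exact (Pi.single_injective v).comp hj) (by
      intro x
      by_cases hx : x = 0
      · simp [hx]
      · simp only [LinearMap.comp_apply, LinearMap.coe_single]
        rw [wtP_single _ _ hx, wtP_single _ _ (by simpa using hj.ne hx), huv])
  simp only [LinearMap.comp_apply, LinearMap.coe_single] at hφ2
  have hwt : ∀ x, wtP (φ (Pi.single v v') + Pi.single u x) = Set.ncard {i | i ≤ u} := by
    intro x
    rw [← hφ2, ← map_add, ← Pi.single_add, hφ, wtP_single _ _ (hv'n x), huv]
  set z := φ (Pi.single v v') with hz
  obtain ⟨x, hx⟩ := exists_ne (0 : H u)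
  have h1 := hwt (-(z u))
  have h2 := hwt (-(z u) + x)
  set w := z + Pi.single u (-(z u)) with hw
  have hwu : w u = 0 := by simp [hw]
  have hu : u ∉ idl (hsupp w) := by
    rintro ⟨b, hb, hub⟩
    have hne : u ≠ b := by rintro rfl; exact hb hwu
    have hsub : insert b {i | i ≤ u} ⊆ idl (hsupp w) := by
      rintro a (rfl | ha)
      · exact subset_idl _ hb
      · exact ⟨b, hb, le_trans ha hub⟩
    have h3 := Set.ncard_le_ncard hsub (Set.toFinite _)
    rw [Set.ncard_insert_of_notMem (show b ∉ {i | i ≤ u} from fun hbu => hne (le_antisymm hub hbu))] at h3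
    unfold wtP at h1
    omega
  rw [Pi.single_add, ← add_assoc, ← hw] at h2
  have hs : insert u (hsupp w) ⊆ hsupp (w + Pi.single u x) := by
    rintro a (rfl | ha)
    · change (w + Pi.single a x) a ≠ 0
      simp [hwu, hx]
    · have hau : a ≠ u := by rintro rfl; exact ha hwu
      change (w + Pi.single u x) a ≠ 0
      have ha' : w a ≠ 0 := ha
      simpa [hau] using ha'
  have hs2 : insert u (idl (hsupp w)) ⊆ idl (hsupp (w + Pi.single u x)) := by
    rintro a (rfl | ha)
    · exact subset_idl _ (hs (Set.mem_insert _ _))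
    · exact idl_mono ((Set.subset_insert _ _).trans hs) ha
  have h3 := Set.ncard_le_ncard hs2 (Set.toFinite _)
  rw [Set.ncard_insert_of_notMem hu] at h3
  unfold wtP at h1 h2
  omega

lemma ncard_down (hP : Hierarchical Ω) (u : Ω) :
    Set.ncard {i | i ≤ u} = Set.ncard {i : Ω | lenP i < lenP u} + 1 := by
  rw [← Set.ncard_insert_of_notMem (a := u) (by simp)]
  congr 1
  ext a
  constructor
  · intro ha
    rcases (show a ≤ u from ha).eq_or_lt with rfl | hlt
    · exact Set.mem_insert _ _
    · exact Or.inr (lenP_lt hlt)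
  · rintro (rfl | ha)
    · exact le_refl a
    · exact hP a u ha

def ell : Option 𝔽 → (𝔽 × 𝔽 →ₗ[𝔽] 𝔽)
  | none => LinearMap.snd 𝔽 𝔽 𝔽
  | some t => LinearMap.fst 𝔽 𝔽 𝔽 - t • LinearMap.snd 𝔽 𝔽 𝔽

lemma ell_zero (x : 𝔽 × 𝔽) (hx : x ≠ 0) : ∃ o, ∀ o', ell o' x = 0 ↔ o' = o := by
  obtain ⟨a, b⟩ := x
  by_cases hb : b = 0
  · refine ⟨none, fun o' => ?_⟩
    subst hb
    have ha : a ≠ 0 := by rintro rfl; exact hx rfl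
    cases o' <;> simp [ell, ha]
  · refine ⟨some (a / b), fun o' => ?_⟩
    cases o' with
    | none => simp [ell, hb]
    | some t =>
      simp only [ell, LinearMap.sub_apply, LinearMap.fst_apply, LinearMap.smul_apply,
        LinearMap.snd_apply, smul_eq_mul, Option.some.injEq]
      rw [sub_eq_zero, eq_div_iff hb, eq_comm]

lemma exists_ker (L : 𝔽 × 𝔽 →ₗ[𝔽] 𝔽) : ∃ x, x ≠ 0 ∧ L x = 0 := by
  by_cases h : L (1, 0) = 0
  · exact ⟨(1, 0), by simp, h⟩
  · refine ⟨(L (0, 1), - L (1, 0)), by simp [h], ?_⟩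
    have : (L (0, 1), - L (1, 0)) = L (0, 1) • ((1, 0) : 𝔽 × 𝔽) - L (1, 0) • ((0, 1) : 𝔽 × 𝔽) := by
      simp
    rw [this, map_sub, map_smul, map_smul]
    simp [mul_comm]

theorem nec_card (h : MEPP 𝔽 H) (hP : Hierarchical Ω) (r : ℕ) (a : ∀ i, 𝔽 × 𝔽 →ₗ[𝔽] H i)
    (ha : ∀ i : Ω, lenP i = r → Function.Injective (a i))
    (g : Option 𝔽 → Ω) (hg : Function.Injective g) (hgr : ∀ o, lenP (g o) = r) : False := by
  classical
  let L : Ω → (𝔽 × 𝔽 →ₗ[𝔽] 𝔽) := Function.extend g ell 0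
  have hLg : ∀ o, L (g o) = ell o := fun o => hg.extend_apply _ _ o
  let l : 𝔽 × 𝔽 →ₗ[𝔽] (∀ i, H i) := LinearMap.pi fun i => a i ∘ₗ LinearMap.inl 𝔽 𝔽 𝔽 ∘ₗ L i
  let T : Set Ω := Set.range (fun t => g (some t))
  let μ : 𝔽 × 𝔽 →ₗ[𝔽] (∀ i, H i) := LinearMap.pi fun i => if i ∈ T then a i else 0
  have ha0 : ∀ i, lenP i = r → ∀ x, a i x = 0 ↔ x = 0 := fun i hi x => map_eq_zero_iff _ (ha i hi)
  have hTr : ∀ i ∈ T, lenP i = r := by rintro _ ⟨t, rfl⟩; exact hgr _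
  have hl : ∀ x i, l x i = a i (L i x, 0) := fun x i => rfl
  have hL0 : ∀ i, (∀ o, g o ≠ i) → L i = 0 := fun i hi =>
    Function.extend_apply' _ _ _ (by rintro ⟨o, ho⟩; exact hi o ho)
  have hμ : ∀ x i, μ x i = if i ∈ T then a i x else 0 := fun x i => by
    simp only [μ, LinearMap.pi_apply]; split_ifs <;> rfl
  have hμi : ∀ x i, x ≠ 0 → (μ x i ≠ 0 ↔ i ∈ T) := by
    intro x i hx
    rw [hμ]
    by_cases hi : i ∈ T
    · simp [hi, ha0 i (hTr i hi), hx]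
    · simp [hi]
  have hli : ∀ x i, (l x i ≠ 0 ↔ ∃ o, g o = i ∧ ell o x ≠ 0) := by
    intro x i
    rw [hl]
    by_cases hi : ∃ o, g o = i
    · obtain ⟨o, rfl⟩ := hi
      rw [hLg, Ne, ha0 _ (hgr o)]
      constructor
      · intro hh; exact ⟨o, rfl, by simpa using hh⟩
      · rintro ⟨o', ho', hh⟩
        rw [← hg ho']; simpa using hh
    · push Not at hi
      rw [hL0 i hi]
      have : (((0 : 𝔽 × 𝔽 →ₗ[𝔽] 𝔽) x, (0 : 𝔽)) : 𝔽 × 𝔽) = 0 := rfl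
      rw [this, map_zero]
      simp only [ne_eq, not_true_eq_false, false_iff]
      rintro ⟨o, ho, -⟩
      exact hi o ho
  have hTcard : T.ncard = Fintype.card 𝔽 := by
    have : T = (fun t => g (some t)) '' Set.univ := by simp [T]
    rw [this, Set.ncard_image_of_injective _ (fun s t hst => Option.some_injective _ (hg hst)),
      Set.ncard_univ, Nat.card_eq_fintype_card]
  have hq : 0 < Fintype.card 𝔽 := Fintype.card_pos
  have hwt : ∀ x, wtP (l x) = wtP (μ x) := by
    intro x
    by_cases hx : x = 0
    · simp [hx]
    have e1 : {i : Ω | lenP i = r ∧ μ x i ≠ 0} = T := by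
      ext i
      constructor
      · rintro ⟨-, hi⟩; exact (hμi x i hx).1 hi
      · intro hi; exact ⟨hTr i hi, (hμi x i hx).2 hi⟩
    have e2 : {i : Ω | lenP i = r ∧ l x i ≠ 0} = g '' {o | ell o x ≠ 0} := by
      ext i
      constructor
      · rintro ⟨-, hi⟩
        obtain ⟨o, ho, ho'⟩ := (hli x i).1 hi
        exact ⟨o, ho', ho⟩
      · rintro ⟨o, ho, rfl⟩; exact ⟨hgr o, (hli x _).2 ⟨o, rfl, ho⟩⟩
    have c2 : Set.ncard {i : Ω | lenP i = r ∧ l x i ≠ 0} = Fintype.card 𝔽 := by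
      rw [e2, Set.ncard_image_of_injective _ hg]
      obtain ⟨o, ho⟩ := ell_zero x hx
      have : {o | ell o x ≠ 0} = {o}ᶜ := by
        ext o'; simp [ho]
      rw [this, Set.ncard_compl, Set.ncard_singleton, Nat.card_eq_fintype_card, Fintype.card_option]
      rfl
    have c1 : Set.ncard {i : Ω | lenP i = r ∧ μ x i ≠ 0} = Fintype.card 𝔽 := by rw [e1, hTcard]
    rw [wtP_formula hP r _ _, wtP_formula hP r _ _, c1, c2]
    · intro i hi; exact (hTr i ((hμi x i hx).1 hi)).le
    · exact Set.nonempty_of_ncard_ne_zero (s := {i : Ω | lenP i = r ∧ μ x i ≠ 0}) (by rw [c1]; omega)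
    · intro i hi
      obtain ⟨o, rfl, -⟩ := (hli x i).1 hi
      exact (hgr o).le
    · exact Set.nonempty_of_ncard_ne_zero (s := {i : Ω | lenP i = r ∧ l x i ≠ 0}) (by rw [c2]; omega)
  have hμinj : Function.Injective μ := by
    rw [← LinearMap.ker_eq_bot, LinearMap.ker_eq_bot']
    intro x hx
    by_contra hx0
    exact (hμi x (g (some 0)) hx0).2 ⟨0, rfl⟩ (by rw [hx]; rfl)
  obtain ⟨φ, hφ, hφ2⟩ := mep_ext h μ l hμinj hwt
  let e : ∀ i, H i := fun i => if lenP i = r ∧ i ∉ T then a i (1, 0) else 0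
  have he : ∀ i, e i ≠ 0 ↔ lenP i = r ∧ i ∉ T := by
    intro i
    by_cases hi : lenP i = r ∧ i ∉ T
    · simp [e, hi, ha0 i hi.1]
    · simp [e, hi]
  have hall : ∀ x, x ≠ 0 → ∀ i, lenP i = r → (l x + φ e) i ≠ 0 := by
    intro x hx i hi
    have hw : wtP (μ x + e) = wtP (l x + φ e) := by
      rw [← hφ2, ← map_add, hφ]
    have hnz : ∀ j, lenP j = r → (μ x + e) j ≠ 0 := by
      intro j hj
      by_cases hjT : j ∈ T
      · have : e j = 0 := by
          by_contra hc; exact ((he j).1 hc).2 hjT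
        rw [Pi.add_apply, this, add_zero]
        exact (hμi x j hx).2 hjT
      · have : μ x j = 0 := by
          by_contra hc; exact hjT ((hμi x j hx).1 hc)
        rw [Pi.add_apply, this, zero_add]
        exact (he j).2 ⟨hj, hjT⟩
    have hc := count_of_wt hP hw r (by
      intro j hj
      by_contra hc
      apply hj
      have h1 : e j = 0 := by
        by_contra h1; exact hc ((he j).1 h1).1.le
      have h2 : μ x j = 0 := by
        by_contra h2; exact hc (hTr j ((hμi x j hx).1 h2)).le
      rw [Pi.add_apply, h1, h2, add_zero])
    have e1 : {i : Ω | lenP i = r ∧ (μ x + e) i ≠ 0} = {i : Ω | lenP i = r} := by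
      ext j
      exact ⟨fun hj => hj.1, fun hj => ⟨hj, hnz j hj⟩⟩
    rw [e1] at hc
    have := Set.eq_of_subset_of_ncard_le (s := {i : Ω | lenP i = r ∧ (l x + φ e) i ≠ 0})
      (t := {i : Ω | lenP i = r}) (fun j hj => hj.1) hc.le (Set.toFinite _)
    have hi' : i ∈ {i : Ω | lenP i = r} := hi
    rw [← this] at hi'
    exact hi'.2
  have hφe : ∀ i, lenP i = r → φ e i ≠ 0 := by
    intro i hi
    obtain ⟨x, hx, hLx⟩ := exists_ker (L i)
    have := hall x hx i hi
    rw [Pi.add_apply, hl, hLx] at this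
    have h0 : a i ((0 : 𝔽), (0 : 𝔽)) = 0 := map_zero (a i)
    rwa [h0, zero_add] at this
  have hc := count_of_wt hP (hφ e).symm r (fun i hi => ((he i).1 hi).1.le)
  have e1 : {i : Ω | lenP i = r ∧ φ e i ≠ 0} = {i : Ω | lenP i = r} := by
    ext j
    exact ⟨fun hj => hj.1, fun hj => ⟨hj, hφe j hj⟩⟩
  rw [e1] at hc
  have := Set.eq_of_subset_of_ncard_le (s := {i : Ω | lenP i = r ∧ e i ≠ 0})
      (t := {i : Ω | lenP i = r}) (fun j hj => hj.1) hc.ge (Set.toFinite _)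
  have hi' : g (some 0) ∈ {i : Ω | lenP i = r} := hgr _
  rw [← this] at hi'
  exact ((he _).1 hi'.2).2 ⟨0, rfl⟩

end nec
end MEPaux

theorem stmt19 {Ω : Type*} [Fintype Ω] [Nonempty Ω] [PartialOrder Ω]
    (𝔽 : Type*) [Field 𝔽] [Fintype 𝔽]
    (k : Ω → ℕ) (hk : ∀ i : Ω, 0 < k i) :
    MEPP 𝔽 (fun i : Ω => Fin (k i) → 𝔽) ↔
      (CondE 𝔽 (fun i : Ω => Fin (k i) → 𝔽) ∧
        ∀ r ∈ Finset.Icc 1 (maxChainCard Ω),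
          (∀ i : Ω, lenP i = r → k i = 1) ∨
            Set.ncard (Wset (Ω := Ω) r) ≤ Fintype.card 𝔽) := by
  classical
  constructor
  · intro h
    have : ∀ i, Nonempty (Fin (k i)) := fun i => ⟨⟨0, hk i⟩⟩
    have hP : Hierarchical Ω := MEPaux.nec_hier h
    have hkle : ∀ u v : Ω, lenP u = lenP v → k v ≤ k u := by
      intro u v huv
      by_contra hc
      obtain ⟨j, hj⟩ : ∃ j : (Fin (k u) → 𝔽) →ₗ[𝔽] (Fin (k v) → 𝔽), Function.Injective j := by
        apply rank_le_iff_exists_linearMap.1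
        simp; omega
      have hs := MEPaux.nec_dim h u v (by
        rw [MEPaux.ncard_down hP, MEPaux.ncard_down hP, huv]) j hj
      have := LinearMap.finrank_le_finrank_of_surjective hs
      simp at this
      omega
    have hkeq : ∀ u v : Ω, lenP u = lenP v → k u = k v := fun u v huv =>
      le_antisymm (hkle v u huv.symm) (hkle u v huv)
    refine ⟨⟨hP, fun u v huv => ?_⟩, fun r _ => ?_⟩
    · exact ⟨LinearEquiv.funCongrLeft 𝔽 𝔽 (finCongr (hkeq u v huv)).symm⟩
    · by_contra hc
      push Not at hc
      obtain ⟨⟨i0, hi0, hk0⟩, hcard⟩ := hc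
      have hk2 : ∀ i : Ω, lenP i = r → 2 ≤ k i := by
        intro i hi
        have h1 := hkeq i i0 (by rw [hi, hi0])
        have h2 := hk i
        omega
      have ha : ∀ i : Ω, ∃ a : 𝔽 × 𝔽 →ₗ[𝔽] (Fin (k i) → 𝔽), lenP i = r → Function.Injective a := by
        intro i
        by_cases hi : lenP i = r
        · obtain ⟨a, ha⟩ : ∃ a : 𝔽 × 𝔽 →ₗ[𝔽] (Fin (k i) → 𝔽), Function.Injective a := by
            apply rank_le_iff_exists_linearMap.1
            have := hk2 i hi
            simp only [rank_prod', Module.rank_self, rank_fun', Fintype.card_fin]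
            have h3 : ((2 : ℕ) : Cardinal) ≤ (k i : Cardinal) := by exact_mod_cast this
            refine le_trans (le_of_eq ?_) h3
            norm_num
          exact ⟨a, fun _ => ha⟩
        · exact ⟨0, fun h' => absurd h' hi⟩
      choose a ha using ha
      have hcard' : Fintype.card (Option 𝔽) ≤ Fintype.card (Wset (Ω := Ω) r) := by
        rw [Fintype.card_option, ← Nat.card_eq_fintype_card (α := Wset (Ω := Ω) r)]
        exact hcard
      obtain ⟨g⟩ := Function.Embedding.nonempty_of_card_le hcard'
      exact MEPaux.nec_card h hP r a ha (fun o => (g o).1)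
        (Subtype.val_injective.comp g.injective) (fun o => (g o).2)
  · rintro ⟨⟨hP, hiso⟩, hr⟩
    refine MEPaux.suff hP hiso fun r => ?_
    by_cases hrr : r ∈ Finset.Icc 1 (maxChainCard Ω)
    · rcases hr r hrr with h1 | h1
      · left
        intro i hi
        have : Unique (Fin (k i)) := by
          rw [h1 i hi]; infer_instance
        exact ⟨LinearEquiv.funUnique (Fin (k i)) 𝔽 𝔽⟩
      · exact Or.inr h1
    · left
      intro i hi
      exact absurd (Finset.mem_Icc.2 ⟨hi ▸ MEPaux.one_le_lenP i, hi ▸ MEPaux.lenP_le_max i⟩) hrr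
end
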